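/- Let n ≥ 1, q ≥ 2, r ≥ 1 and α > −1, and let μ be a positive Borel measure on 𝔹ₙ. Then the Carleson embedding J_μ : A^1_α → L^q(dμ) is r-summing if and only if J_μ : A^1_α → L^q(dμ) is bounded. -/

import Mathlib

open MeasureTheory Metric Filter Complex
open scoped ENNReal NNReal BigOperators ComplexConjugate

noncomputable section

/-- `ℂⁿ` with the Euclidean norm. -/
abbrev En (n : ℕ) := EuclideanSpace ℂ (Fin n)

instance (n : ℕ) : InnerProductSpace ℝ (En n) := InnerProductSpace.complexToReal
instance (n : ℕ) : MeasurableSpace (En n) := borel _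
instance (n : ℕ) : BorelSpace (En n) := ⟨rfl⟩
instance (n : ℕ) : FiniteDimensional ℝ (En n) := Module.Finite.trans ℂ (En n)

/-- The open unit ball `𝔹ₙ`. -/
def unitBall (n : ℕ) : Set (En n) := Metric.ball 0 1

/-- The Hermitian pairing `⟨z,w⟩ = ∑ zⱼ conj wⱼ`. -/
def herm {n : ℕ} (z w : En n) : ℂ := ∑ j, z j * conj (w j)

/-- Normalized Lebesgue volume measure on `𝔹ₙ` (total mass 1). -/
def vMeas (n : ℕ) : Measure (En n) :=
  (volume (Metric.ball (0 : En n) 1))⁻¹ • volume.restrict (Metric.ball 0 1)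

/-- The normalizing constant `c_α = Γ(n+1+α)/(n!·Γ(α+1))`. -/
def volConst (n : ℕ) (α : ℝ) : ℝ :=
  Real.Gamma (n + 1 + α) / ((n.factorial : ℝ) * Real.Gamma (α + 1))

/-- The weighted measure `dv_α = c_α (1-|z|²)^α dv`. -/
def wMeas (n : ℕ) (α : ℝ) : Measure (En n) :=
  (vMeas n).withDensity fun z => ENNReal.ofReal (volConst n α * (1 - ‖z‖ ^ 2) ^ α)

-- The Möbius involution `φ_z` of `𝔹ₙ` interchanging `z` and `0`, evaluated at `w`.
open scoped Classical in
def mobius {n : ℕ} (z w : En n) : En n :=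
  if z = 0 then -w
  else
    (1 - herm w z)⁻¹ •
      (z - (herm w z / herm z z) • z -
        ((Real.sqrt (1 - ‖z‖ ^ 2) : ℝ) : ℂ) • (w - (herm w z / herm z z) • z))

/-- The Bergman metric on `𝔹ₙ`. -/
def bergmanDist {n : ℕ} (z w : En n) : ℝ :=
  (1 / 2) * Real.log ((1 + ‖mobius z w‖) / (1 - ‖mobius z w‖))

/-- The Bergman metric ball `B(z,r)`. -/
def bergmanBall {n : ℕ} (z : En n) (r : ℝ) : Set (En n) :=
  {w | w ∈ unitBall n ∧ bergmanDist z w < r}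

/-- The Möbius invariant measure `dλ(z) = (1-|z|²)^{-(n+1)} dv(z)`. -/
def invMeas (n : ℕ) : Measure (En n) :=
  (vMeas n).withDensity fun z => ENNReal.ofReal ((1 - ‖z‖ ^ 2) ^ (-(n + 1 : ℝ)))

/-- A sequence in `𝔹ₙ` which is separated (with separation constant `ε`)
in the Bergman metric. -/
def IsSeparated {n : ℕ} (a : ℕ → En n) (ε : ℝ) : Prop :=
  (∀ k, a k ∈ unitBall n) ∧ ∀ i j, i ≠ j → ε ≤ bergmanDist (a i) (a j)

/-- A `δ`-lattice in the Bergman metric. -/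
def IsLattice {n : ℕ} (a : ℕ → En n) (δ : ℝ) : Prop :=
  (∀ k, a k ∈ unitBall n) ∧
    (∀ z ∈ unitBall n, ∃ k, z ∈ bergmanBall (a k) δ) ∧
      ∀ i j, i ≠ j → Disjoint (bergmanBall (a i) (δ / 4)) (bergmanBall (a j) (δ / 4))

/-- `T` satisfies the `(r,s)`-summing inequality with constant `C`. -/
def SummingBoundWith (r s : ℝ) {X Y : Type*} [NormedAddCommGroup X] [NormedSpace ℂ X]
    [NormedAddCommGroup Y] (T : X → Y) (C : ℝ) : Prop :=
  ∀ (m : ℕ) (x : Fin m → X),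
    (∑ k, ‖T (x k)‖ ^ r) ^ (1 / r) ≤
      C * ⨆ φ : {φ : X →L[ℂ] ℂ // ‖φ‖ ≤ 1}, (∑ k, ‖φ.1 (x k)‖ ^ s) ^ (1 / s)

/-- `T` is `(r,s)`-summing. -/
def IsSummingRS (r s : ℝ) {X Y : Type*} [NormedAddCommGroup X] [NormedSpace ℂ X]
    [NormedAddCommGroup Y] (T : X → Y) : Prop :=
  ∃ C, 0 ≤ C ∧ SummingBoundWith r s T C

/-- The `(r,s)`-summing norm `π_{r,s}(T)`. -/
def summingNorm (r s : ℝ) {X Y : Type*} [NormedAddCommGroup X] [NormedSpace ℂ X]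
    [NormedAddCommGroup Y] (T : X → Y) : ℝ :=
  sInf {C | 0 ≤ C ∧ SummingBoundWith r s T C}

/-- The subspace of `Lp` consisting of (a.e. classes of) functions having a representative
holomorphic on `Ω`. -/
def holoSubmodule (n : ℕ) (p : ℝ≥0∞) [Fact (1 ≤ p)] (Ω : Set (En n)) (μ : Measure (En n)) :
    Submodule ℂ (Lp ℂ p μ) where
  carrier := {f | ∃ g : En n → ℂ, DifferentiableOn ℂ g Ω ∧ (f : En n → ℂ) =ᵐ[μ] g}
  zero_mem' := ⟨fun _ => 0, differentiableOn_const 0, Lp.coeFn_zero ℂ p μ⟩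
  add_mem' := by
    rintro f f' ⟨g, hg, hfg⟩ ⟨g', hg', hfg'⟩
    exact ⟨g + g', hg.add hg', (Lp.coeFn_add f f').trans (hfg.add hfg')⟩
  smul_mem' := by
    rintro c f ⟨g, hg, hfg⟩
    exact ⟨c • g, hg.const_smul c, (Lp.coeFn_smul c f).trans (hfg.const_smul c)⟩

/-- The weighted Bergman space `A^p_α` as a subspace of `L^p(dv_α)`. -/
abbrev BergmanSpace (n : ℕ) (p α : ℝ) [Fact (1 ≤ ENNReal.ofReal p)] :=
  ↥(holoSubmodule n (ENNReal.ofReal p) (unitBall n) (wMeas n α))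

/-- The kernel `H_{p,z}(w) = (1-⟨z,w⟩)^{-b}`. -/
def Hker {n : ℕ} (b : ℝ) (z : En n) : En n → ℂ := fun w => (1 - herm z w) ^ (-(b : ℂ))

/-- The `L^p(dv_α)` norm of a function. -/
def lpNormOn (n : ℕ) (p α : ℝ) (g : En n → ℂ) : ℝ :=
  (∫ w, ‖g w‖ ^ p ∂wMeas n α) ^ (1 / p)

/-- The normalized test function `h_{p,z} = H_{p,z}/‖H_{p,z}‖_{p,α}`
(with kernel exponent `b`). -/
def hTest (n : ℕ) (p α b : ℝ) (z : En n) : En n → ℂ := fun w =>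
  Hker b z w / ((lpNormOn n p α (Hker b z) : ℝ) : ℂ)

/-- The `ℓ^s` norm of a sequence of reals, valued in `ℝ≥0∞`. -/
def ellNormE (s : ℝ) (b : ℕ → ℝ) : ℝ≥0∞ := (∑' k, ENNReal.ofReal (b k) ^ s) ^ (1 / s)

/-- The `ℓ^s` norm of a sequence of extended reals. -/
def ellNormE' (s : ℝ) (b : ℕ → ℝ≥0∞) : ℝ≥0∞ := (∑' k, b k ^ s) ^ (1 / s)

/-- The `L^s(𝔹ₙ,dλ)` norm of a nonnegative function, valued in `ℝ≥0∞`. -/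
def lamNormE (n : ℕ) (s : ℝ) (g : En n → ℝ) : ℝ≥0∞ :=
  (∫⁻ z, ENNReal.ofReal (g z) ^ s ∂invMeas n) ^ (1 / s)

/-- The Bergman projection `P_β`. -/
def bergmanProj (n : ℕ) (β : ℝ) (f : En n → ℂ) (z : En n) : ℂ :=
  ∫ w, f w * (1 - herm z w) ^ (-((n : ℂ) + 1 + (β : ℂ))) ∂wMeas n β

/-- The conjugate Bergman projection. -/
def conjBergmanProj (n : ℕ) (β : ℝ) (f : En n → ℂ) (z : En n) : ℂ :=
  ∫ w, f w * (1 - herm w z) ^ (-((n : ℂ) + 1 + (β : ℂ))) ∂wMeas n β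

/-- `g` is bounded and holomorphic on `𝔹ₙ`. -/
def BoundedHolo (n : ℕ) (g : En n → ℂ) : Prop :=
  DifferentiableOn ℂ g (unitBall n) ∧ ∃ M, ∀ z ∈ unitBall n, ‖g z‖ ≤ M

/-- The big Hankel operator `H^β_f(g) = f g - P_β(f g)` at the level of functions. -/
def hankelFun (n : ℕ) (β : ℝ) (f g : En n → ℂ) : En n → ℂ := fun z =>
  f z * g z - bergmanProj n β (fun w => f w * g w) z

/-- The little Hankel operator `h^β_f(g) = conj-P_β(f g)` at the level of functions. -/
def littleHankelFun (n : ℕ) (β : ℝ) (f g : En n → ℂ) : En n → ℂ :=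
  conjBergmanProj n β fun w => f w * g w

/-- `T : A^p_α → L^q(dv_β)` extends the big Hankel operator `H^β_f` from the
bounded holomorphic functions. -/
def ExtendsBigHankel (n : ℕ) (p q α β : ℝ) [Fact (1 ≤ ENNReal.ofReal p)]
    [Fact (1 ≤ ENNReal.ofReal q)] (f : En n → ℂ)
    (T : BergmanSpace n p α → Lp ℂ (ENNReal.ofReal q) (wMeas n β)) : Prop :=
  ∀ g : En n → ℂ, BoundedHolo n g →
    ∀ G : BergmanSpace n p α,
      ((G : Lp ℂ (ENNReal.ofReal p) (wMeas n α)) : En n → ℂ) =ᵐ[wMeas n α] g →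
        (T G : En n → ℂ) =ᵐ[wMeas n β] hankelFun n β f g

/-- `T : A^p_α → L^q(dv_β)` extends the little Hankel operator `h^β_f` from the
bounded holomorphic functions. -/
def ExtendsLittleHankel (n : ℕ) (p q α β : ℝ) [Fact (1 ≤ ENNReal.ofReal p)]
    [Fact (1 ≤ ENNReal.ofReal q)] (f : En n → ℂ)
    (T : BergmanSpace n p α → Lp ℂ (ENNReal.ofReal q) (wMeas n β)) : Prop :=
  ∀ g : En n → ℂ, BoundedHolo n g →
    ∀ G : BergmanSpace n p α,
      ((G : Lp ℂ (ENNReal.ofReal p) (wMeas n α)) : En n → ℂ) =ᵐ[wMeas n α] g →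
        (T G : En n → ℂ) =ᵐ[wMeas n β] littleHankelFun n β f g

/-- `J : A^p_α → L^q(dμ)` represents the Carleson embedding `J_μ f = f`. -/
def RepresentsEmbedding (n : ℕ) (p q α : ℝ) [Fact (1 ≤ ENNReal.ofReal p)]
    [Fact (1 ≤ ENNReal.ofReal q)] (μ : Measure (En n))
    (J : BergmanSpace n p α → Lp ℂ (ENNReal.ofReal q) μ) : Prop :=
  ∀ (G : BergmanSpace n p α) (g : En n → ℂ), DifferentiableOn ℂ g (unitBall n) →
    ((G : Lp ℂ (ENNReal.ofReal p) (wMeas n α)) : En n → ℂ) =ᵐ[wMeas n α] g →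
      (J G : En n → ℂ) =ᵐ[μ] g

/-- The IDA function `G_{q,δ}(f)(z)`. -/
def Gq (n : ℕ) (q δ : ℝ) (f : En n → ℂ) (z : En n) : ℝ :=
  ⨅ h : {h : En n → ℂ // DifferentiableOn ℂ h (bergmanBall z δ)},
    ((vMeas n (bergmanBall z δ)).toReal⁻¹ *
        ∫ w in bergmanBall z δ, ‖f w - h.1 w‖ ^ q ∂vMeas n) ^ (1 / q)

/-- The average of `f` over the Bergman ball `B(z,δ)`. -/
def ballAvg (n : ℕ) (δ : ℝ) (f : En n → ℂ) (z : En n) : ℂ :=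
  ((vMeas n (bergmanBall z δ)).toReal⁻¹ : ℝ) • ∫ w in bergmanBall z δ, f w ∂vMeas n

/-- The local mean oscillation `MO_{q,δ}(f)(z)`. -/
def MOq (n : ℕ) (q δ : ℝ) (f : En n → ℂ) (z : En n) : ℝ :=
  ((vMeas n (bergmanBall z δ)).toReal⁻¹ *
      ∫ w in bergmanBall z δ, ‖f w - ballAvg n δ f z‖ ^ q ∂vMeas n) ^ (1 / q)

/-- The integral operator `V_{b,β}`. -/
def Vop (n : ℕ) (b β : ℝ) (f : En n → ℂ) (z : En n) : ℂ :=
  ((volConst n (b + β) / volConst n β : ℝ) : ℂ) * (((1 - ‖z‖ ^ 2) ^ b : ℝ) : ℂ) *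
    ∫ w, f w * (1 - herm z w) ^ (-((n : ℂ) + 1 + (β : ℂ) + (b : ℂ))) ∂wMeas n β

/-- The norm of the invariant gradient `|∇̃f(z)| = |∇(f ∘ φ_z)(0)|`. -/
def invGradNorm (n : ℕ) (f : En n → ℂ) (z : En n) : ℝ :=
  ‖fderiv ℂ (fun w => f (mobius z w)) 0‖

/-- The Besov space norm `‖f‖_{B^γ_s}`, valued in `ℝ≥0∞`. -/
def besovNorm (n : ℕ) (s γ : ℝ) (f : En n → ℂ) : ℝ≥0∞ :=
  (∫⁻ z, ENNReal.ofReal ((1 - ‖z‖ ^ 2) ^ γ * invGradNorm n f z) ^ s ∂invMeas n) ^ (1 / s)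


instance : Fact ((1 : ℝ≥0∞) ≤ ENNReal.ofReal (1 : ℝ)) := ⟨by simp⟩

/-!
A bounded embedding tested on powers of the kernels `(1 - ⟪z, w⟫)⁻¹` gives the Carleson condition
`μ(B) ≲ (1 - |a|)^(q(n+1+α))` on non-isotropic balls `B` centred at `a`. Since `q ≥ 2`, this is also
the Carleson condition for the Hilbert space `A²_{n+1+2α}`, so `J_μ` factors through the inclusion
`A¹_α → A²_{n+1+2α}`, and it is enough to show that this inclusion is `1`-summing.

By the mean value property `f(w) = ∫ f(z) k(z, w) dv_α(z)`, where `k(·, w)` is a normalized weighted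
indicator of a non-isotropic ball around `w`, and the norms of `k(z, ·)` in `L²` of the target
measure are bounded uniformly in `z`. The inclusion is therefore the restriction of an operator from
`L¹` into a Hilbert space, and these are `1`-summing by Grothendieck's theorem.
-/

section Rademacher

variable {ι E : Type*} [Fintype ι] [DecidableEq ι]

/-- The partial Rademacher sum `∑ ±uᵢ` over `i ∈ s` attached to a choice of signs; averages over all
choices of signs play the role of expectations. -/
def radSum [AddCommGroup E] (s : Finset ι) (ω : ι → ℤˣ) (u : ι → E) : E := ∑ i ∈ s, ω i • u i

/-- Flipping the `i`-th sign is a bijection of the choices of signs. -/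
theorem two_mul_sum_radSum_insert [AddCommGroup E] {𝕜 : Type*} [CommRing 𝕜] {s : Finset ι} {i : ι}
    (hi : i ∉ s) (F : E → 𝕜) (u : ι → E) :
    2 * ∑ ω, F (radSum (insert i s) ω u) =
      ∑ ω, (F (u i + radSum s ω u) + F (-u i + radSum s ω u)) := by
  let η : ι → ℤˣ := Function.update 1 i (-1)
  have hη : ∀ ω : ι → ℤˣ, radSum s (η * ω) u = radSum s ω u := fun ω =>
    Finset.sum_congr rfl fun j hj => by
      simp [η, Function.update_of_ne (ne_of_mem_of_not_mem hj hi)]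
  have hflip : ∑ ω, F (radSum (insert i s) ω u) = ∑ ω, F (-(ω i • u i) + radSum s ω u) := by
    rw [← Equiv.sum_comp (Equiv.mulLeft η)]
    refine Finset.sum_congr rfl fun ω _ => ?_
    rw [Equiv.coe_mulLeft, radSum, Finset.sum_insert hi]
    congr 2
    · simp [η]
    · exact hη ω
  rw [two_mul]
  nth_rewrite 2 [hflip]
  rw [← Finset.sum_add_distrib]
  refine Finset.sum_congr rfl fun ω _ => ?_
  rw [radSum, Finset.sum_insert hi, ← radSum]
  rcases Int.units_eq_one_or (ω i) with h | h
  · simp [h]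
  · simp [h, add_comm (F (u i + radSum s ω u))]

theorem sum_radSum_eq_of_parallelogram [AddCommGroup E] {𝕜 : Type*} [Field 𝕜] [CharZero 𝕜]
    {F : E → 𝕜} (h0 : F 0 = 0) (hF : ∀ a b, F (a + b) + F (-a + b) = 2 * (F a + F b))
    (s : Finset ι) (u : ι → E) :
    ∑ ω, F (radSum s ω u) = Fintype.card (ι → ℤˣ) * ∑ i ∈ s, F (u i) := by
  induction s using Finset.induction with
  | empty => simp [radSum, h0]
  | insert i s hi ih =>
    refine mul_left_cancel₀ (two_ne_zero (α := 𝕜)) ?_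
    rw [two_mul_sum_radSum_insert hi, Finset.sum_insert hi]
    simp only [hF, Finset.sum_add_distrib, ← Finset.mul_sum, ih, Finset.sum_const,
      Finset.card_univ, nsmul_eq_mul]
    ring

theorem sum_radSum_mul_radSum {𝕜 : Type*} [Field 𝕜] [CharZero 𝕜] (s : Finset ι) (u h : ι → 𝕜) :
    ∑ ω, radSum s ω h * radSum s ω u = Fintype.card (ι → ℤˣ) * ∑ i ∈ s, h i * u i := by
  have := sum_radSum_eq_of_parallelogram (F := fun p : 𝕜 × 𝕜 => p.1 * p.2) (by simp)
    (fun a b => by simp only [Prod.fst_add, Prod.snd_add, Prod.fst_neg, Prod.snd_neg]; ring)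
    s fun i => (h i, u i)
  simpa only [radSum, Prod.fst_sum, Prod.snd_sum, Prod.smul_fst, Prod.smul_snd] using this

variable [NormedAddCommGroup E] [InnerProductSpace ℝ E]

theorem sum_norm_radSum_sq (s : Finset ι) (u : ι → E) :
    ∑ ω, ‖radSum s ω u‖ ^ 2 = Fintype.card (ι → ℤˣ) * ∑ i ∈ s, ‖u i‖ ^ 2 :=
  sum_radSum_eq_of_parallelogram (F := fun a : E => ‖a‖ ^ 2) (by simp)
    (fun a b => by
      rw [norm_add_sq_real, norm_add_sq_real, inner_neg_left, norm_neg]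
      ring) s u

theorem norm_add_pow_four_add_norm_neg_add_pow_four_le (a b : E) :
    ‖a + b‖ ^ 4 + ‖-a + b‖ ^ 4 ≤ 2 * ‖a‖ ^ 4 + 12 * (‖a‖ ^ 2 * ‖b‖ ^ 2) + 2 * ‖b‖ ^ 4 := by
  have hinner : inner ℝ a b ^ 2 ≤ ‖a‖ ^ 2 * ‖b‖ ^ 2 := by
    rw [← mul_pow]
    exact sq_le_sq' (abs_le.1 (abs_real_inner_le_norm a b)).1 (real_inner_le_norm a b)
  have hpow : ∀ x : ℝ, x ^ 4 = (x ^ 2) ^ 2 := fun x => by ring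
  rw [hpow ‖a + b‖, hpow ‖-a + b‖, norm_add_sq_real, norm_add_sq_real, inner_neg_left, norm_neg]
  linarith

theorem sum_norm_radSum_pow_four_le (s : Finset ι) (u : ι → E) :
    ∑ ω, ‖radSum s ω u‖ ^ 4 ≤ 3 * Fintype.card (ι → ℤˣ) * (∑ i ∈ s, ‖u i‖ ^ 2) ^ 2 := by
  induction s using Finset.induction with
  | empty => simp [radSum]
  | insert i s hi ih =>
    rw [Finset.sum_insert hi]
    refine le_of_mul_le_mul_left ?_ (two_pos (α := ℝ))
    set N : ℝ := (Fintype.card (ι → ℤˣ) : ℝ) with hN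
    set A := ∑ j ∈ s, ‖u j‖ ^ 2 with hA
    calc 2 * ∑ ω, ‖radSum (insert i s) ω u‖ ^ 4
        = ∑ ω, (‖u i + radSum s ω u‖ ^ 4 + ‖-u i + radSum s ω u‖ ^ 4) :=
          two_mul_sum_radSum_insert hi (fun a => ‖a‖ ^ 4) u
      _ ≤ ∑ ω, (2 * ‖u i‖ ^ 4 + 12 * (‖u i‖ ^ 2 * ‖radSum s ω u‖ ^ 2) +
            2 * ‖radSum s ω u‖ ^ 4) :=
          Finset.sum_le_sum fun ω _ => norm_add_pow_four_add_norm_neg_add_pow_four_le _ _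
      _ = N * (2 * ‖u i‖ ^ 4) + 12 * (‖u i‖ ^ 2 * (N * A)) +
            2 * ∑ ω, ‖radSum s ω u‖ ^ 4 := by
          simp only [Finset.sum_add_distrib, ← Finset.mul_sum, sum_norm_radSum_sq,
            Finset.sum_const, Finset.card_univ, nsmul_eq_mul, ← hN, ← hA]
          ring
      _ ≤ N * (2 * ‖u i‖ ^ 4) + 12 * (‖u i‖ ^ 2 * (N * A)) + 2 * (3 * N * A ^ 2) := by gcongr
      _ ≤ 2 * (3 * N * (‖u i‖ ^ 2 + A) ^ 2) := by
          have : 0 ≤ N * ‖u i‖ ^ 4 := by positivity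
          linarith

end Rademacher

section Truncation

/-- Truncation at level `7`, a level at which the two remainders in Grothendieck's inequality add up
to at most half of the main term, see `HilbertBound.improve`. -/
def trunc (z : ℂ) : ℂ := if ‖z‖ ≤ 7 then z else 0

theorem norm_trunc_le (z : ℂ) : ‖trunc z‖ ≤ 7 := by
  unfold trunc
  split_ifs with h
  · exact h
  · simp

theorem norm_trunc_le_norm (z : ℂ) : ‖trunc z‖ ≤ ‖z‖ := by
  unfold trunc
  split_ifs <;> simp

theorem norm_sub_trunc_sq_le (z : ℂ) : ‖z - trunc z‖ ^ 2 ≤ ‖z‖ ^ 4 / 49 := by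
  unfold trunc
  split_ifs with h
  · rw [sub_self, norm_zero, zero_pow two_ne_zero]
    positivity
  · rw [sub_zero, le_div_iff₀ (by norm_num)]
    nlinarith [mul_nonneg (sq_nonneg ‖z‖) (show 0 ≤ ‖z‖ ^ 2 - 49 by nlinarith)]

theorem measurable_trunc : Measurable trunc :=
  Measurable.ite (measurableSet_le measurable_norm measurable_const) measurable_id measurable_const

variable {ι : Type*} [Fintype ι] [DecidableEq ι] {u : ι → ℂ}

theorem sum_norm_trunc_radSum_sq_le (hu : ∑ i, ‖u i‖ ^ 2 ≤ 1) :
    ∑ ω, ‖trunc (radSum Finset.univ ω u)‖ ^ 2 ≤ Fintype.card (ι → ℤˣ) := by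
  calc ∑ ω, ‖trunc (radSum Finset.univ ω u)‖ ^ 2 ≤ ∑ ω, ‖radSum Finset.univ ω u‖ ^ 2 := by
        gcongr
        exact norm_trunc_le_norm _
    _ = Fintype.card (ι → ℤˣ) * ∑ i, ‖u i‖ ^ 2 := sum_norm_radSum_sq _ _
    _ ≤ Fintype.card (ι → ℤˣ) := mul_le_of_le_one_right (by positivity) hu

theorem sum_norm_radSum_sub_trunc_sq_le (hu : ∑ i, ‖u i‖ ^ 2 ≤ 1) :
    ∑ ω, ‖radSum Finset.univ ω u - trunc (radSum Finset.univ ω u)‖ ^ 2 ≤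
      Fintype.card (ι → ℤˣ) / 16 := by
  have hsq : (∑ i, ‖u i‖ ^ 2) ^ 2 ≤ 1 := pow_le_one₀ (by positivity) hu
  calc ∑ ω, ‖radSum Finset.univ ω u - trunc (radSum Finset.univ ω u)‖ ^ 2
      ≤ ∑ ω, ‖radSum Finset.univ ω u‖ ^ 4 / 49 :=
        Finset.sum_le_sum fun ω _ => norm_sub_trunc_sq_le _
    _ ≤ 3 * Fintype.card (ι → ℤˣ) * (∑ i, ‖u i‖ ^ 2) ^ 2 / 49 := by
        rw [← Finset.sum_div]
        gcongr
        exact sum_norm_radSum_pow_four_le _ _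
    _ ≤ 3 * Fintype.card (ι → ℤˣ) * 1 / 49 := by gcongr
    _ ≤ Fintype.card (ι → ℤˣ) / 16 := by
        linarith [show (0 : ℝ) ≤ Fintype.card (ι → ℤˣ) by positivity]

end Truncation

section Grothendieck

variable {X κ ι : Type*} [MeasurableSpace X] {v : Measure X} [Fintype κ] [Fintype ι]
  {f : κ → X → ℂ} {u u' : ι → X → ℂ} {h h' : κ → ι → ℂ} {C S : ℝ}

/-- The bilinear form `∑ₖ ⟨hₖ, ∫ fₖ u⟩` in a measurable field of vectors `u` and a family of vectors
`hₖ`, all given by their coordinates. -/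
def hilbertForm (v : Measure X) (f : κ → X → ℂ) (u : ι → X → ℂ) (h : κ → ι → ℂ) : ℂ :=
  ∑ k, ∑ i, h k i * ∫ x, f k x * u i x ∂v

/-- `C` bounds the bilinear form of `f` on the unit balls of all finite-dimensional Hilbert
spaces. -/
def HilbertBound (v : Measure X) (f : κ → X → ℂ) (C : ℝ) : Prop :=
  ∀ (ι : Type) [Fintype ι] (u : ι → X → ℂ) (h : κ → ι → ℂ), (∀ i, Measurable (u i)) →
    (∀ x, ∑ i, ‖u i x‖ ^ 2 ≤ 1) → (∀ k, ∑ i, ‖h k i‖ ^ 2 ≤ 1) → ‖hilbertForm v f u h‖ ≤ C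

/-- `S` bounds `∑ₖ |∫ fₖ a|` over the unit ball of `L^∞`: for functions `fₖ ∈ L¹` this is the weak
`ℓ¹` norm. -/
def ScalarBound (v : Measure X) (f : κ → X → ℂ) (S : ℝ) : Prop :=
  ∀ a : X → ℂ, Measurable a → (∀ x, ‖a x‖ ≤ 1) → ∑ k, ‖∫ x, f k x * a x ∂v‖ ≤ S

theorem integrable_mul_of_norm_le_const {g a : X → ℂ} (hg : Integrable g v) (ha : Measurable a)
    {c : ℝ} (hc : ∀ x, ‖a x‖ ≤ c) : Integrable (fun x => g x * a x) v :=
  hg.mul_bdd ha.aestronglyMeasurable (Eventually.of_forall hc)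

theorem hilbertForm_const_mul (s t : ℂ) :
    hilbertForm v f (fun i x => s * u i x) (fun k i => t * h k i) =
      s * t * hilbertForm v f u h := by
  simp only [hilbertForm, Finset.mul_sum, mul_left_comm (f _ _), integral_const_mul]
  exact Finset.sum_congr rfl fun k _ => Finset.sum_congr rfl fun i _ => by ring

theorem hilbertForm_eq_add_sub_add_sub (hu : ∀ k i, Integrable (fun x => f k x * u i x) v)
    (hu' : ∀ k i, Integrable (fun x => f k x * u' i x) v) :
    hilbertForm v f u h = hilbertForm v f u' h' +
      hilbertForm v f (fun i x => u i x - u' i x) h' +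
      hilbertForm v f u (fun k i => h k i - h' k i) := by
  simp only [hilbertForm, sub_mul, mul_sub, integral_sub (hu _ _) (hu' _ _), Finset.sum_sub_distrib]
  ring

theorem hilbertForm_radSum [DecidableEq ι] (hu : ∀ k i, Integrable (fun x => f k x * u i x) v) :
    hilbertForm v f (fun ω x => radSum Finset.univ ω fun i => u i x)
        (fun k ω => radSum Finset.univ ω (h k)) =
      Fintype.card (ι → ℤˣ) * hilbertForm v f u h := by
  have h_int : ∀ k (ω : ι → ℤˣ), ∫ x, f k x * radSum Finset.univ ω (fun i => u i x) ∂v =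
      radSum Finset.univ ω fun i => ∫ x, f k x * u i x ∂v := fun k ω => by
    simp only [radSum, Finset.mul_sum, Units.smul_def, zsmul_eq_mul, mul_left_comm (f k _)]
    rw [integral_finsetSum _ fun i _ => (hu k i).const_mul _]
    simp only [integral_const_mul]
  simp only [hilbertForm, h_int, sum_radSum_mul_radSum, Finset.mul_sum]

theorem HilbertBound.norm_hilbertForm_le {ι : Type} [Fintype ι] {u : ι → X → ℂ} {h : κ → ι → ℂ}
    (hC : HilbertBound v f C) (hu : ∀ i, Measurable (u i)) {s t : ℝ} (hs : 0 < s) (ht : 0 < t)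
    (hus : ∀ x, ∑ i, ‖u i x‖ ^ 2 ≤ s) (hht : ∀ k, ∑ i, ‖h k i‖ ^ 2 ≤ t) :
    ‖hilbertForm v f u h‖ ≤ √(s * t) * C := by
  have normalize : ∀ {r : ℝ} (a : ι → ℂ), 0 < r → ∑ i, ‖a i‖ ^ 2 ≤ r →
      ∑ i, ‖((√r)⁻¹ : ℂ) * a i‖ ^ 2 ≤ 1 := fun {r} a hr ha => by
    simpa only [norm_mul, norm_inv, mul_pow, ← Finset.mul_sum, Complex.norm_real, Real.norm_eq_abs,
      inv_pow, sq_abs, Real.sq_sqrt hr.le, inv_mul_le_iff₀ hr, mul_one] using ha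
  have key := hC ι _ _ (fun i => (hu i).const_mul ((√s)⁻¹ : ℂ))
    (fun x => normalize _ hs (hus x)) fun k => normalize _ ht (hht k)
  rwa [hilbertForm_const_mul, ← mul_inv, norm_mul, norm_inv, ← Complex.ofReal_mul,
    ← Real.sqrt_mul hs.le, Complex.norm_real, Real.norm_of_nonneg (Real.sqrt_nonneg _),
    inv_mul_le_iff₀ (Real.sqrt_pos.2 (mul_pos hs ht))] at key

theorem ScalarBound.norm_hilbertForm_le (hS : ScalarBound v f S) {a b : ℝ} (ha : 0 < a)
    (hb : 0 ≤ b) (hu : ∀ i, Measurable (u i)) (hua : ∀ i x, ‖u i x‖ ≤ a)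
    (hhb : ∀ k i, ‖h k i‖ ≤ b) :
    ‖hilbertForm v f u h‖ ≤ Fintype.card ι * (a * b * S) := by
  have hi : ∀ i, ∑ k, ‖∫ x, f k x * u i x ∂v‖ ≤ a * S := fun i => by
    have := hS (fun x => (a : ℂ)⁻¹ * u i x) ((hu i).const_mul _) fun x => by
      rw [norm_mul, norm_inv, Complex.norm_real, Real.norm_of_nonneg ha.le, inv_mul_le_iff₀ ha,
        mul_one]
      exact hua i x
    simpa only [mul_left_comm (f _ _), integral_const_mul, norm_mul, norm_inv, Complex.norm_real,
      Real.norm_of_nonneg ha.le, ← Finset.mul_sum, inv_mul_le_iff₀ ha] using this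
  calc ‖hilbertForm v f u h‖
      ≤ ∑ i, ∑ k, ‖h k i * ∫ x, f k x * u i x ∂v‖ := by
        rw [hilbertForm, Finset.sum_comm]
        exact (norm_sum_le _ _).trans (Finset.sum_le_sum fun i _ => norm_sum_le _ _)
    _ ≤ ∑ i, ∑ k, b * ‖∫ x, f k x * u i x ∂v‖ := by
        simp only [norm_mul]
        gcongr
        exact hhb _ _
    _ ≤ ∑ _i : ι, b * (a * S) := by
        refine Finset.sum_le_sum fun i _ => ?_
        rw [← Finset.mul_sum]
        exact mul_le_mul_of_nonneg_left (hi i) hb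
    _ = Fintype.card ι * (a * b * S) := by
        simp only [Finset.sum_const, Finset.card_univ, nsmul_eq_mul]
        ring

theorem integrable_mul_of_sum_norm_sq_le {g : X → ℂ} (hg : Integrable g v)
    (hu : ∀ i, Measurable (u i)) {s : ℝ} (hus : ∀ x, ∑ i, ‖u i x‖ ^ 2 ≤ s) (i : ι) :
    Integrable (fun x => g x * u i x) v :=
  integrable_mul_of_norm_le_const hg (hu i) fun x =>
    Real.le_sqrt_of_sq_le ((Finset.single_le_sum (f := fun i => ‖u i x‖ ^ 2)
      (fun _ _ => by positivity) (Finset.mem_univ i)).trans (hus x))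

theorem sum_norm_mul_norm_le_one {u h : ι → ℂ} (hu : ∑ i, ‖u i‖ ^ 2 ≤ 1)
    (hh : ∑ i, ‖h i‖ ^ 2 ≤ 1) : ∑ i, ‖h i‖ * ‖u i‖ ≤ 1 := by
  calc ∑ i, ‖h i‖ * ‖u i‖ ≤ √(∑ i, ‖h i‖ ^ 2) * √(∑ i, ‖u i‖ ^ 2) :=
        Real.sum_mul_le_sqrt_mul_sqrt _ _ _
    _ ≤ 1 := mul_le_one₀ (Real.sqrt_le_one.2 hh) (Real.sqrt_nonneg _) (Real.sqrt_le_one.2 hu)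

theorem hilbertBound_sum_integral_norm (hf : ∀ k, Integrable (f k) v) :
    HilbertBound v f (∑ k, ∫ x, ‖f k x‖ ∂v) := by
  intro ι _ u h hu hu1 hh
  refine (norm_sum_le _ _).trans (Finset.sum_le_sum fun k _ => ?_)
  have h_int : ∀ i, Integrable (fun x => h k i * (f k x * u i x)) v := fun i =>
    (integrable_mul_of_sum_norm_sq_le (hf k) hu hu1 i).const_mul _
  simp_rw [← integral_const_mul]
  rw [← integral_finsetSum _ fun i _ => h_int i]
  refine norm_integral_le_of_norm_le (hf k).norm (Eventually.of_forall fun x => ?_)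
  calc ‖∑ i, h k i * (f k x * u i x)‖ ≤ ∑ i, ‖h k i * (f k x * u i x)‖ := norm_sum_le _ _
    _ = ‖f k x‖ * ∑ i, ‖h k i‖ * ‖u i x‖ := by
        simp only [norm_mul, Finset.mul_sum, mul_left_comm]
    _ ≤ ‖f k x‖ := mul_le_of_le_one_right (norm_nonneg _) (sum_norm_mul_norm_le_one (hu1 x) (hh k))

/-- Replace the vectors by their Rademacher sums `U`, `H` and split
`(U, H) = (U₀, H₀) + (U - U₀, H₀) + (U, H - H₀)` with the truncations `U₀`, `H₀`: the first term is
bounded by scalars and the fourth moments make the remainders small. -/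
theorem HilbertBound.improve (hf : ∀ k, Integrable (f k) v) (hS : ScalarBound v f S)
    (hC : HilbertBound v f C) : HilbertBound v f (49 * S + C / 2) := by
  classical
  intro ι _ u h hu hu1 hh
  set N : ℝ := (Fintype.card (ι → ℤˣ) : ℝ)
  have hN0 : 0 < N := by positivity
  have hsqrt : √(N / 16 * N) = N / 4 := by
    rw [show N / 16 * N = (N / 4) ^ 2 by ring, Real.sqrt_sq (by positivity)]
  let U : (ι → ℤˣ) → X → ℂ := fun ω x => radSum Finset.univ ω fun i => u i x
  let H : κ → (ι → ℤˣ) → ℂ := fun k ω => radSum Finset.univ ω (h k)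
  let U₀ : (ι → ℤˣ) → X → ℂ := fun ω x => trunc (U ω x)
  let H₀ : κ → (ι → ℤˣ) → ℂ := fun k ω => trunc (H k ω)
  have hU : ∀ ω, Measurable (U ω) := fun ω =>
    Finset.measurable_fun_sum _ fun i _ => (hu i).const_smul (ω i : ℤ)
  have hU₀ : ∀ ω, Measurable (U₀ ω) := fun ω => measurable_trunc.comp (hU ω)
  have main : ‖hilbertForm v f U₀ H₀‖ ≤ N * (7 * 7 * S) :=
    hS.norm_hilbertForm_le (by norm_num) (by norm_num) hU₀ (fun ω x => norm_trunc_le _)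
      fun k ω => norm_trunc_le _
  have remU : ‖hilbertForm v f (fun ω x => U ω x - U₀ ω x) H₀‖ ≤ √(N / 16 * N) * C :=
    hC.norm_hilbertForm_le (fun ω => (hU ω).sub (hU₀ ω)) (by positivity) hN0
      (fun x => sum_norm_radSum_sub_trunc_sq_le (hu1 x)) fun k => sum_norm_trunc_radSum_sq_le (hh k)
  have remH : ‖hilbertForm v f U (fun k ω => H k ω - H₀ k ω)‖ ≤ √(N * (N / 16)) * C :=
    hC.norm_hilbertForm_le hU hN0 (by positivity)
      (fun x => (sum_norm_radSum_sq _ _).trans_le (mul_le_of_le_one_right hN0.le (hu1 x)))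
      fun k => sum_norm_radSum_sub_trunc_sq_le (hh k)
  refine le_of_mul_le_mul_left ?_ hN0
  calc N * ‖hilbertForm v f u h‖ = ‖hilbertForm v f U H‖ := by
        rw [hilbertForm_radSum (fun k => integrable_mul_of_sum_norm_sq_le (hf k) hu hu1), norm_mul,
          Complex.norm_natCast]
    _ ≤ N * (7 * 7 * S) + √(N / 16 * N) * C + √(N * (N / 16)) * C := by
        rw [hilbertForm_eq_add_sub_add_sub (u' := U₀) (h' := H₀)
          (fun k => integrable_mul_of_sum_norm_sq_le (hf k) hU fun x =>
            (sum_norm_radSum_sq _ _).trans_le (mul_le_of_le_one_right hN0.le (hu1 x)))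
          fun k ω => integrable_mul_of_norm_le_const (hf k) (hU₀ ω) fun x => norm_trunc_le _]
        exact norm_add₃_le.trans (add_le_add (add_le_add main remU) remH)
    _ = N * (49 * S + C / 2) := by
        rw [mul_comm N (N / 16), hsqrt]
        ring

theorem ScalarBound.hilbertBound (hf : ∀ k, Integrable (f k) v) (hS : ScalarBound v f S) :
    HilbertBound v f (98 * S) := by
  set C₀ := ∑ k, ∫ x, ‖f k x‖ ∂v
  have iter : ∀ j : ℕ, HilbertBound v f (98 * S + (1 / 2) ^ j * (C₀ - 98 * S)) := fun j => by
    induction j with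
    | zero => simpa [C₀] using hilbertBound_sum_integral_norm hf
    | succ j ih =>
      convert ih.improve hf hS using 1
      ring
  have hlim : Tendsto (fun j : ℕ => 98 * S + (1 / 2 : ℝ) ^ j * (C₀ - 98 * S)) atTop
      (nhds (98 * S + 0 * (C₀ - 98 * S))) :=
    ((tendsto_pow_atTop_nhds_zero_of_lt_one (by norm_num) (by norm_num)).mul_const _).const_add _
  rw [zero_mul, add_zero] at hlim
  exact fun ι _ u h hu hu1 hh => ge_of_tendsto' hlim fun j => iter j ι u h hu hu1 hh

end Grothendieck

section Kernel

open scoped InnerProductSpace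

variable {X Y κ : Type*} [MeasurableSpace X] [MeasurableSpace Y] {v : Measure X} {ν : Measure Y}
  {B S : ℝ}

theorem sum_norm_inv_norm_mul_inner_sq_le {H ι : Type*} [NormedAddCommGroup H]
    [InnerProductSpace ℂ H] [Fintype ι] {e : ι → H} (he : Orthonormal ℂ e) (g : H) :
    ∑ i, ‖(‖g‖⁻¹ : ℂ) * ⟪g, e i⟫_ℂ‖ ^ 2 ≤ 1 := by
  simp only [norm_mul, mul_pow, ← Finset.mul_sum, norm_inv, Complex.norm_real, norm_norm,
    norm_inner_symm g, inv_pow]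
  exact inv_mul_le_one_of_le₀ (he.sum_inner_products_le g) (by positivity)

theorem exists_orthonormal_sum_inner_mul_inner_eq {H : Type*} [NormedAddCommGroup H]
    [InnerProductSpace ℂ H] [Finite κ] (g : κ → H) :
    ∃ (d : ℕ) (e : Fin d → H), Orthonormal ℂ e ∧
      ∀ j, ∑ i, ⟪g j, e i⟫_ℂ * ⟪e i, g j⟫_ℂ = (‖g j‖ : ℂ) ^ 2 := by
  let W : Submodule ℂ H := Submodule.span ℂ (Set.range g)
  have : FiniteDimensional ℂ W := FiniteDimensional.span_of_finite ℂ (Set.finite_range g)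
  let b := stdOrthonormalBasis ℂ W
  refine ⟨_, fun i => b i, b.orthonormal.comp_linearIsometry W.subtypeₗᵢ, fun j => ?_⟩
  have hj : g j ∈ W := Submodule.subset_span ⟨j, rfl⟩
  exact (b.sum_inner_mul_inner ⟨g j, hj⟩ ⟨g j, hj⟩).trans (inner_self_eq_norm_sq_to_K (g j))

/-- A family `K x` of vectors bounded by `B` defines an operator `f ↦ ∫ f(x) K(x)` from `L¹` to a
Hilbert space, here in weak form; by Grothendieck's inequality it is `1`-summing. -/
theorem ScalarBound.sum_norm_le [Fintype κ] {H : Type*} [NormedAddCommGroup H]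
    [InnerProductSpace ℂ H] {f : κ → X → ℂ} (hf : ∀ k, Integrable (f k) v)
    (hS : ScalarBound v f S) {K : X → H} (hB : 0 < B) (hK : ∀ x, ‖K x‖ ≤ B)
    (hKm : ∀ e, Measurable fun x => ⟪e, K x⟫_ℂ) {g : κ → H}
    (hg : ∀ k e, ⟪e, g k⟫_ℂ = ∫ x, f k x * ⟪e, K x⟫_ℂ ∂v) :
    ∑ k, ‖g k‖ ≤ B * (98 * S) := by
  obtain ⟨d, e, he, hparseval⟩ := exists_orthonormal_sum_inner_mul_inner_eq g
  have hform : hilbertForm v f (fun i x => (B : ℂ)⁻¹ * ⟪e i, K x⟫_ℂ)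
      (fun k i => (‖g k‖⁻¹ : ℂ) * ⟪g k, e i⟫_ℂ) = (B : ℂ)⁻¹ * ∑ k, (‖g k‖ : ℂ) := by
    simp only [hilbertForm, Finset.mul_sum, mul_left_comm (f _ _), integral_const_mul, ← hg]
    refine Finset.sum_congr rfl fun k _ => ?_
    calc ∑ i, (‖g k‖⁻¹ : ℂ) * ⟪g k, e i⟫_ℂ * ((B : ℂ)⁻¹ * ⟪e i, g k⟫_ℂ)
        = (B : ℂ)⁻¹ * ((‖g k‖ : ℂ)⁻¹ * ∑ i, ⟪g k, e i⟫_ℂ * ⟪e i, g k⟫_ℂ) := by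
          simp only [Finset.mul_sum]
          exact Finset.sum_congr rfl fun i _ => by ring
      _ = (B : ℂ)⁻¹ * ‖g k‖ := by
          rw [hparseval, sq, ← mul_assoc (‖g k‖ : ℂ)⁻¹, mul_comm (‖g k‖ : ℂ)⁻¹, mul_inv_mul_cancel]
  have hu1 : ∀ x, ∑ i, ‖(B : ℂ)⁻¹ * ⟪e i, K x⟫_ℂ‖ ^ 2 ≤ 1 := fun x => by
    simp only [norm_mul, norm_inv, mul_pow, ← Finset.mul_sum, Complex.norm_real,
      Real.norm_of_nonneg hB.le]
    rw [inv_pow, inv_mul_le_one₀ (pow_pos hB 2)]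
    exact (he.sum_inner_products_le (K x)).trans (pow_le_pow_left₀ (norm_nonneg _) (hK x) 2)
  have key := hS.hilbertBound hf _ _ _ (fun i => (hKm (e i)).const_mul (B : ℂ)⁻¹) hu1 fun k =>
    sum_norm_inv_norm_mul_inner_sq_le he (g k)
  rwa [hform, norm_mul, norm_inv, Complex.norm_real, Real.norm_of_nonneg hB.le,
    ← Complex.ofReal_sum, Complex.norm_real,
    Real.norm_of_nonneg (Finset.sum_nonneg fun _ _ => norm_nonneg _), inv_mul_le_iff₀ hB] at key

theorem eLpNorm_two_sq {E : Type*} [NormedAddCommGroup E] (g : Y → E) :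
    eLpNorm g 2 ν ^ 2 = ∫⁻ y, ‖g y‖ₑ ^ 2 ∂ν := by
  simpa using eLpNorm_nnreal_pow_eq_lintegral (f := g) (μ := ν) (p := 2) two_ne_zero

theorem lintegral_mul_sq_le {φ ψ : X → ℝ≥0∞} (hφ : AEMeasurable φ v) (hψ : AEMeasurable ψ v) :
    (∫⁻ x, φ x * ψ x ∂v) ^ 2 ≤ (∫⁻ x, φ x ∂v) * ∫⁻ x, φ x * ψ x ^ 2 ∂v := by
  have hsq : ∀ t : ℝ≥0∞, (t ^ (1 / 2 : ℝ)) ^ 2 = t := fun t => by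
    rw [← ENNReal.rpow_natCast, ← ENNReal.rpow_mul]
    norm_num
  have hsqrt : ∀ t : ℝ≥0∞, (t ^ 2) ^ (1 / 2 : ℝ) = t := fun t => by
    rw [← ENNReal.rpow_natCast, ← ENNReal.rpow_mul]
    norm_num
  calc (∫⁻ x, φ x * ψ x ∂v) ^ 2
      = (∫⁻ x, φ x ^ (1 / 2 : ℝ) * (φ x * ψ x ^ 2) ^ (1 / 2 : ℝ) ∂v) ^ 2 := by
        refine congrArg (· ^ 2) (lintegral_congr fun x => ?_)
        rw [ENNReal.mul_rpow_of_nonneg _ _ (by norm_num), ← mul_assoc, ← sq, hsq, hsqrt]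
    _ ≤ ((∫⁻ x, φ x ∂v) ^ (1 / 2 : ℝ) * (∫⁻ x, φ x * ψ x ^ 2 ∂v) ^ (1 / 2 : ℝ)) ^ 2 := by
        gcongr
        exact ENNReal.lintegral_mul_norm_pow_le hφ (hφ.mul (hψ.pow_const 2)) (by norm_num)
          (by norm_num) (by norm_num)
    _ = (∫⁻ x, φ x ∂v) * ∫⁻ x, φ x * ψ x ^ 2 ∂v := by rw [mul_pow, hsq, hsq]

variable [SFinite v] [SFinite ν] {k : X → Y → ℂ} {f : X → ℂ}

theorem memLp_two_integral_mul_kernel (hf : Integrable f v) (hk : Measurable (Function.uncurry k))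
    (hB : ∀ x, eLpNorm (k x) 2 ν ≤ ENNReal.ofReal B) :
    MemLp (fun y => ∫ x, f x * k x y ∂v) 2 ν := by
  have hk' : Measurable fun p : Y × X => k p.2 p.1 := hk.comp measurable_swap
  refine ⟨(hf.1.comp_snd.mul hk'.aestronglyMeasurable).integral_prod_right', ?_⟩
  refine (ENNReal.pow_lt_top_iff (n := 2)).1 ?_ |>.resolve_right two_ne_zero
  rw [eLpNorm_two_sq]
  calc ∫⁻ y, ‖∫ x, f x * k x y ∂v‖ₑ ^ 2 ∂ν
      ≤ ∫⁻ y, (∫⁻ x, ‖f x‖ₑ ∂v) * ∫⁻ x, ‖f x‖ₑ * ‖k x y‖ₑ ^ 2 ∂v ∂ν := by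
        refine lintegral_mono fun y => le_trans ?_ (lintegral_mul_sq_le hf.1.enorm
          (hk.comp measurable_prodMk_right).enorm.aemeasurable)
        gcongr
        exact (enorm_integral_le_lintegral_enorm _).trans_eq (by simp only [enorm_mul])
    _ = (∫⁻ x, ‖f x‖ₑ ∂v) * ∫⁻ x, ‖f x‖ₑ * eLpNorm (k x) 2 ν ^ 2 ∂v := by
        rw [lintegral_const_mul' _ _ hf.2.ne, lintegral_lintegral_swap
          (hf.1.enorm.comp_snd.mul (hk'.enorm.pow_const 2).aemeasurable)]
        simp only [lintegral_const_mul' _ _ enorm_ne_top, eLpNorm_two_sq]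
    _ ≤ (∫⁻ x, ‖f x‖ₑ ∂v) * ∫⁻ x, ‖f x‖ₑ * ENNReal.ofReal B ^ 2 ∂v := by
        gcongr with x
        exact hB x
    _ < ∞ := by
        rw [lintegral_mul_const' _ _ (by finiteness)]
        exact ENNReal.mul_lt_top hf.2 (ENNReal.mul_lt_top hf.2 (by finiteness))

theorem integral_conj_mul_integral_mul_kernel (hf : Integrable f v)
    (hk : Measurable (Function.uncurry k)) (hB : ∀ x, eLpNorm (k x) 2 ν ≤ ENNReal.ofReal B)
    {e : Y → ℂ} (he : MemLp e 2 ν) :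
    ∫ y, conj (e y) * ∫ x, f x * k x y ∂v ∂ν = ∫ x, f x * ∫ y, conj (e y) * k x y ∂ν ∂v := by
  have hm : AEStronglyMeasurable (fun p : Y × X => conj (e p.1) * (f p.2 * k p.2 p.1))
      (ν.prod v) :=
    (Complex.continuous_conj.comp_aestronglyMeasurable he.1.comp_fst).mul
      (hf.1.comp_snd.mul (hk.comp measurable_swap).aestronglyMeasurable)
  have holder : ∀ x, ∫⁻ y, ‖e y‖ₑ * ‖k x y‖ₑ ∂ν ≤ eLpNorm e 2 ν * ENNReal.ofReal B := fun x => by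
    calc ∫⁻ y, ‖e y‖ₑ * ‖k x y‖ₑ ∂ν = eLpNorm (e • k x) 1 ν := by
          simp [eLpNorm_one_eq_lintegral_enorm]
      _ ≤ eLpNorm e 2 ν * eLpNorm (k x) 2 ν :=
          eLpNorm_smul_le_mul_eLpNorm (hk.comp measurable_prodMk_left).aestronglyMeasurable he.1
      _ ≤ eLpNorm e 2 ν * ENNReal.ofReal B := by gcongr; exact hB x
  have h_int : Integrable (Function.uncurry fun y x => conj (e y) * (f x * k x y)) (ν.prod v) := by
    refine ⟨hm, ?_⟩
    refine (lintegral_prod_symm _ hm.enorm).trans_lt ?_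
    calc ∫⁻ x, ∫⁻ y, ‖conj (e y) * (f x * k x y)‖ₑ ∂ν ∂v
        = ∫⁻ x, ‖f x‖ₑ * ∫⁻ y, ‖e y‖ₑ * ‖k x y‖ₑ ∂ν ∂v := by
          simp only [enorm_mul, RCLike.enorm_conj, ← lintegral_const_mul' _ _ enorm_ne_top,
            mul_left_comm]
      _ ≤ ∫⁻ x, ‖f x‖ₑ * (eLpNorm e 2 ν * ENNReal.ofReal B) ∂v := by
          gcongr with x
          exact holder x
      _ < ∞ := by
          have := he.2.ne
          rw [lintegral_mul_const' _ _ (by finiteness)]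
          exact ENNReal.mul_lt_top hf.2 (by finiteness)
  simp only [← integral_const_mul]
  rw [integral_integral_swap h_int]
  simp only [mul_left_comm]

theorem ScalarBound.sum_eLpNorm_two_integral_mul_kernel_le [Fintype κ] {f : κ → X → ℂ}
    (hf : ∀ j, Integrable (f j) v) (hS : ScalarBound v f S) (hk : Measurable (Function.uncurry k))
    (hB0 : 0 < B) (hB : ∀ x, eLpNorm (k x) 2 ν ≤ ENNReal.ofReal B) :
    ∑ j, (eLpNorm (fun y => ∫ x, f j x * k x y ∂v) 2 ν).toReal ≤ B * (98 * S) := by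
  have hk2 : ∀ x, MemLp (k x) 2 ν := fun x =>
    ⟨(hk.comp measurable_prodMk_left).aestronglyMeasurable,
      (hB x).trans_lt ENNReal.ofReal_lt_top⟩
  have hg2 := fun j => memLp_two_integral_mul_kernel (hf j) hk hB
  have hinner : ∀ (e : Lp ℂ 2 ν) {g : Y → ℂ} (hg : MemLp g 2 ν),
      ⟪e, hg.toLp⟫_ℂ = ∫ y, conj (e y) * g y ∂ν := fun e g hg => by
    rw [L2.inner_def]
    refine integral_congr_ae (hg.coeFn_toLp.mono fun y hy => ?_)
    simp only [hy, RCLike.inner_apply']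
  have hmeas : ∀ e : Lp ℂ 2 ν, Measurable fun x => ∫ y, conj (e y) * k x y ∂ν := fun e =>
    StronglyMeasurable.measurable <| StronglyMeasurable.integral_prod_right <|
      (Complex.continuous_conj.comp_stronglyMeasurable
        ((Lp.stronglyMeasurable e).comp_measurable measurable_snd)).mul hk.stronglyMeasurable
  have key := hS.sum_norm_le hf (K := fun x => (hk2 x).toLp) (g := fun j => (hg2 j).toLp) hB0
    (fun x => ?_) (fun e => ?_) fun j e => ?_
  · simpa only [Lp.norm_toLp] using key
  · rw [Lp.norm_toLp]
    exact ENNReal.toReal_le_of_le_ofReal hB0.le (hB x)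
  · simpa only [hinner] using hmeas e
  · simp only [hinner]
    exact integral_conj_mul_integral_mul_kernel (hf j) hk hB (Lp.memLp e)

end Kernel

section Anisotropic

open scoped InnerProductSpace
open Module (finrank)

variable {E : Type*} [NormedAddCommGroup E] [InnerProductSpace ℂ E] {a w z η ξ : E} {c t : ℝ}

/-- The anisotropic neighbourhood of the origin attached to `a`: displacements of size `t` in the
complex direction of `a` and of size `t ^ (1 / 2)` in the remaining ones. For `t` comparable to
`1 - ‖a‖ ^ 2`, its translate by `a` is comparable to a Bergman metric ball. -/
def anisoBox (a : E) (t : ℝ) : Set E := {η | ‖⟪a, η⟫_ℂ‖ < t ∧ ‖η‖ ^ 2 < t}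

theorem isOpen_anisoBox (a : E) (t : ℝ) : IsOpen (anisoBox a t) :=
  (isOpen_lt (f := fun η => ‖⟪a, η⟫_ℂ‖) (by fun_prop) continuous_const).inter
    (isOpen_lt (f := fun η => ‖η‖ ^ 2) (by fun_prop) continuous_const)

theorem balanced_anisoBox (a : E) (t : ℝ) : Balanced ℂ (anisoBox a t) := by
  rintro x hx _ ⟨η, hη, rfl⟩
  refine ⟨lt_of_le_of_lt ?_ hη.1, lt_of_le_of_lt ?_ hη.2⟩
  · rw [inner_smul_right, norm_mul]
    exact mul_le_of_le_one_left (norm_nonneg _) hx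
  · rw [norm_smul]
    gcongr
    exact mul_le_of_le_one_left (norm_nonneg _) hx

theorem inner_self_eq_ofReal_norm_sq (w : E) : ⟪w, w⟫_ℂ = ((‖w‖ ^ 2 : ℝ) : ℂ) := by
  rw [inner_self_eq_norm_sq_to_K, ofReal_pow]
  rfl

theorem one_sub_norm_sq_pos_iff {F : Type*} [SeminormedAddCommGroup F] {w : F} :
    0 < 1 - ‖w‖ ^ 2 ↔ ‖w‖ < 1 := by
  rw [sub_pos, sq_lt_one_iff₀ (norm_nonneg w)]

theorem norm_inner_le_norm_of_norm_le_one (hw : ‖w‖ ≤ 1) (ξ : E) : ‖⟪w, ξ⟫_ℂ‖ ≤ ‖ξ‖ :=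
  (norm_inner_le_norm w ξ).trans (mul_le_of_le_one_left (norm_nonneg ξ) hw)

theorem exists_anisoBox_subset (ha : 1 - ‖a‖ ^ 2 ≤ t) (ht : t < 1) :
    ∃ b : E, 1 - ‖b‖ ^ 2 = t ∧ anisoBox a t ⊆ anisoBox b t := by
  have ha0 : 0 < ‖a‖ := (norm_nonneg a).lt_of_ne' (pow_ne_zero_iff two_ne_zero |>.1 (by linarith))
  have hle : √(1 - t) / ‖a‖ ≤ 1 :=
    div_le_one_of_le₀ (Real.sqrt_le_iff.2 ⟨ha0.le, by linarith⟩) ha0.le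
  refine ⟨((√(1 - t) / ‖a‖ : ℝ) : ℂ) • a, ?_, fun η hη => ⟨lt_of_le_of_lt ?_ hη.1, hη.2⟩⟩
  · rw [norm_smul, Complex.norm_real, Real.norm_of_nonneg (by positivity),
      div_mul_cancel₀ _ ha0.ne', Real.sq_sqrt (by linarith), sub_sub_cancel]
  · rw [inner_smul_left, norm_mul, RCLike.norm_conj, Complex.norm_real,
      Real.norm_of_nonneg (by positivity)]
    exact mul_le_of_le_one_left (norm_nonneg _) hle

/-- The linear map taking unit-sized sets to anisotropic neighbourhoods attached to `w`: it scales
the direction of `w` by `1 - ‖w‖ ^ 2` and its orthogonal complement by the square root of this. -/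
def anisoMap (w : E) : E →ₗ[ℂ] E :=
  (√(1 - ‖w‖ ^ 2) : ℂ) •
    LinearMap.transvection ((-(1 + (√(1 - ‖w‖ ^ 2) : ℂ))⁻¹) • (innerSL ℂ w).toLinearMap) w

theorem anisoMap_apply (w ξ : E) :
    anisoMap w ξ = (√(1 - ‖w‖ ^ 2) : ℂ) •
      (ξ - (((1 + √(1 - ‖w‖ ^ 2))⁻¹ : ℝ) * ⟪w, ξ⟫_ℂ) • w) := by
  simp [anisoMap, LinearMap.transvection.apply, sub_eq_add_neg]

theorem inner_anisoMap (hw : ‖w‖ < 1) (ξ : E) :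
    ⟪w, anisoMap w ξ⟫_ℂ = ((1 - ‖w‖ ^ 2 : ℝ) : ℂ) * ⟪w, ξ⟫_ℂ := by
  rw [anisoMap_apply, inner_smul_right, inner_sub_right, inner_smul_right,
    inner_self_eq_ofReal_norm_sq]
  have hs := Real.sq_sqrt (one_sub_norm_sq_pos_iff.2 hw).le
  set s := √(1 - ‖w‖ ^ 2)
  have hs1 : (1 + s : ℂ) ≠ 0 := by exact_mod_cast (show 1 + s ≠ 0 by positivity)
  rw [← hs, show ‖w‖ ^ 2 = 1 - s ^ 2 by linarith]
  push_cast
  field_simp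
  ring

theorem norm_sq_anisoMap (hw : ‖w‖ < 1) (ξ : E) :
    ‖anisoMap w ξ‖ ^ 2 = (1 - ‖w‖ ^ 2) * (‖ξ‖ ^ 2 - ‖⟪w, ξ⟫_ℂ‖ ^ 2) := by
  have hs := Real.sq_sqrt (one_sub_norm_sq_pos_iff.2 hw).le
  have hcross (k : ℝ) : RCLike.re ⟪ξ, ((k : ℂ) * ⟪w, ξ⟫_ℂ) • w⟫_ℂ = k * ‖⟪w, ξ⟫_ℂ‖ ^ 2 := by
    rw [inner_smul_right, mul_assoc, ← inner_conj_symm ξ w, RCLike.mul_conj,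
      RCLike.re_eq_complex_re, re_ofReal_mul]
    norm_cast
  rw [anisoMap_apply, norm_smul, mul_pow, norm_sub_sq (𝕜 := ℂ), hcross, norm_smul,
    norm_mul, Complex.norm_real, Complex.norm_real, Real.norm_of_nonneg (Real.sqrt_nonneg _), hs,
    Real.norm_of_nonneg (by positivity), mul_pow, mul_pow]
  set s := √(1 - ‖w‖ ^ 2)
  rw [show ‖w‖ ^ 2 = 1 - s ^ 2 by linarith]
  have hs1 : 1 + s ≠ 0 := by positivity
  field_simp
  ring

theorem preimage_anisoMap_anisoBox (hw : ‖w‖ < 1) (c : ℝ) :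
    anisoMap w ⁻¹' anisoBox w (c * (1 - ‖w‖ ^ 2)) =
      {ξ | ‖⟪w, ξ⟫_ℂ‖ < c ∧ ‖ξ‖ ^ 2 < c + ‖⟪w, ξ⟫_ℂ‖ ^ 2} := by
  have hw' := one_sub_norm_sq_pos_iff.2 hw
  ext ξ
  simp only [anisoBox, Set.mem_preimage, Set.mem_ofPred_eq, inner_anisoMap hw, norm_sq_anisoMap hw,
    norm_mul, Complex.norm_real, Real.norm_of_nonneg hw'.le, mul_comm c, mul_lt_mul_iff_right₀ hw',
    sub_lt_iff_lt_add]

variable [FiniteDimensional ℂ E]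

theorem det_anisoMap (hw : ‖w‖ < 1) :
    LinearMap.det (anisoMap w) = (√(1 - ‖w‖ ^ 2) : ℂ) ^ (finrank ℂ E + 1) := by
  have hs := Real.sq_sqrt (one_sub_norm_sq_pos_iff.2 hw).le
  rw [anisoMap, LinearMap.det_smul, LinearMap.transvection.det]
  simp only [LinearMap.smul_apply, ContinuousLinearMap.coe_coe, innerSL_apply_apply,
    inner_self_eq_ofReal_norm_sq, smul_eq_mul]
  set s := √(1 - ‖w‖ ^ 2)
  rw [show ‖w‖ ^ 2 = 1 - s ^ 2 by linarith]
  have hs1 : (1 + s : ℂ) ≠ 0 := by exact_mod_cast (show 1 + s ≠ 0 by positivity)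
  push_cast
  field_simp
  ring

theorem det_restrictScalars_anisoMap (hw : ‖w‖ < 1) :
    LinearMap.det ((anisoMap w).restrictScalars ℝ) = (1 - ‖w‖ ^ 2) ^ (finrank ℂ E + 1) := by
  rw [LinearMap.det_restrictScalars, det_anisoMap hw, map_pow, Algebra.norm_complex_apply,
    normSq_ofReal, Real.mul_self_sqrt (one_sub_norm_sq_pos_iff.2 hw).le]

variable [MeasurableSpace E] [BorelSpace E] (ν : Measure E) [ν.IsAddHaarMeasure]

theorem measure_anisoBox (hw : ‖w‖ < 1) (c : ℝ) :
    ν (anisoBox w (c * (1 - ‖w‖ ^ 2))) = ENNReal.ofReal ((1 - ‖w‖ ^ 2) ^ (finrank ℂ E + 1)) *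
      ν {ξ | ‖⟪w, ξ⟫_ℂ‖ < c ∧ ‖ξ‖ ^ 2 < c + ‖⟪w, ξ⟫_ℂ‖ ^ 2} := by
  have hδ : 0 < (1 - ‖w‖ ^ 2) ^ (finrank ℂ E + 1) := pow_pos (one_sub_norm_sq_pos_iff.2 hw) _
  have h := Measure.addHaar_preimage_linearMap ν (f := (anisoMap w).restrictScalars ℝ)
    (by rw [det_restrictScalars_anisoMap hw]; exact hδ.ne') (anisoBox w (c * (1 - ‖w‖ ^ 2)))
  rw [LinearMap.coe_restrictScalars, preimage_anisoMap_anisoBox hw,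
    det_restrictScalars_anisoMap hw, abs_inv, abs_of_pos hδ, ENNReal.ofReal_inv_of_pos hδ] at h
  rw [h, ENNReal.mul_inv_cancel_left (ENNReal.ofReal_pos.2 hδ).ne' ENNReal.ofReal_ne_top]

theorem measure_anisoBox_le (ha : 1 - ‖a‖ ^ 2 ≤ t) :
    ν (anisoBox a t) ≤ ENNReal.ofReal (t ^ (finrank ℂ E + 1)) * ν (ball 0 2) := by
  rcases le_or_gt t 0 with ht0 | ht0
  · have : anisoBox a t = ∅ :=
      Set.eq_empty_of_forall_notMem fun η hη => (hη.2.trans_le ht0).not_ge (sq_nonneg _)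
    simp [this]
  rcases le_or_gt 1 t with ht | ht
  · calc ν (anisoBox a t) ≤ ν (ball 0 (√t * 2)) := measure_mono fun η hη => by
          rw [mem_ball_zero_iff]
          linarith [Real.lt_sqrt_of_sq_lt hη.2, Real.sqrt_nonneg t]
      _ = ENNReal.ofReal (t ^ finrank ℂ E) * ν (ball 0 2) := by
          rw [Measure.addHaar_ball_mul_of_pos ν 0 (Real.sqrt_pos.2 ht0), finrank_real_of_complex,
            pow_mul, Real.sq_sqrt ht0.le]
      _ ≤ _ := by
          gcongr
          exact Nat.le_succ _
  · obtain ⟨b, hbt, hab⟩ := exists_anisoBox_subset ha ht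
    have h := measure_anisoBox ν (one_sub_norm_sq_pos_iff.1 (hbt.symm ▸ ht0)) 1
    rw [hbt, one_mul] at h
    refine (measure_mono hab).trans (h.trans_le ?_)
    gcongr
    intro ξ hξ
    rw [mem_ball_zero_iff]
    nlinarith [hξ.1, hξ.2, norm_nonneg ⟪b, ξ⟫_ℂ, norm_nonneg ξ]

theorem le_measure_anisoBox (hw : ‖w‖ < 1) (hc : c ≤ 1) :
    ENNReal.ofReal ((1 - ‖w‖ ^ 2) ^ (finrank ℂ E + 1)) * ν (ball 0 c) ≤
      ν (anisoBox w (c * (1 - ‖w‖ ^ 2))) := by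
  rw [measure_anisoBox ν hw]
  gcongr
  intro ξ hξ
  rw [mem_ball_zero_iff] at hξ
  exact ⟨(norm_inner_le_norm_of_norm_le_one hw.le ξ).trans_lt hξ,
    by nlinarith [norm_nonneg ξ, sq_nonneg ‖⟪w, ξ⟫_ℂ‖]⟩

end Anisotropic

section MeanValue

open scoped Pointwise

variable {E F : Type*} [NormedAddCommGroup E] [NormedSpace ℂ E] [NormedAddCommGroup F] {S : Set E}

theorem circleAverage_apply_smul_eq [NormedSpace ℂ F] [CompleteSpace F] (hS : Balanced ℂ S)
    {g : E → F} (hg : DifferentiableOn ℂ g S) {η : E} (hη : η ∈ S) :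
    Real.circleAverage (fun a : ℂ => g (a • η)) 0 1 = g 0 := by
  have hd : DifferentiableOn ℂ (fun a : ℂ => g (a • η)) (closedBall 0 1) :=
    hg.comp (by fun_prop) fun a ha => hS.smul_mem (by simpa using ha) hη
  have hdc : DiffContOnCl ℂ (fun a : ℂ => g (a • η)) (ball 0 |1|) :=
    DifferentiableOn.diffContOnCl (by rwa [abs_one, closure_ball _ one_ne_zero])
  simpa using hdc.circleAverage

variable [FiniteDimensional ℂ E] [MeasurableSpace E] [BorelSpace E] {ν : Measure E}
  [ν.IsAddHaarMeasure]

theorem measurePreserving_const_smul_of_norm_eq_one {a : ℂ} (ha : ‖a‖ = 1) :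
    MeasurePreserving (fun η : E => a • η) ν ν := by
  have hdet : |LinearMap.det ((a • LinearMap.id : E →ₗ[ℂ] E).restrictScalars ℝ)| = 1 := by
    rw [LinearMap.det_restrictScalars, LinearMap.det_smul, LinearMap.det_id, mul_one, map_pow,
      Algebra.norm_complex_apply, normSq_eq_norm_sq, ha, one_pow, one_pow, abs_one]
  refine ⟨measurable_const_smul a, ?_⟩
  have h := Measure.map_linearMap_addHaar_eq_smul_addHaar ν
    (f := (a • LinearMap.id : E →ₗ[ℂ] E).restrictScalars ℝ) fun h0 => by
      rw [h0, abs_zero] at hdet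
      exact zero_ne_one hdet
  rwa [abs_inv, hdet, inv_one, ENNReal.ofReal_one, one_smul] at h

theorem measurePreserving_const_smul_restrict (hS : Balanced ℂ S) {a : ℂ} (ha : ‖a‖ = 1) :
    MeasurePreserving (fun η => a • η) (ν.restrict S) (ν.restrict S) := by
  have ha0 : a ≠ 0 := norm_ne_zero_iff.1 (ha.symm ▸ one_ne_zero)
  have h := (measurePreserving_const_smul_of_norm_eq_one (ν := ν) ha).restrict_preimage_emb
    (measurableEmbedding_const_smul₀ ha0) S
  rwa [Set.preimage_smul₀ ha0, hS.smul_eq (by simp [ha])] at h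

theorem integrable_circleMap_smul (hS : Balanced ℂ S) (hSm : MeasurableSet S) {g : E → F}
    (hg : ContinuousOn g S) (hgi : IntegrableOn g S ν) :
    Integrable (Function.uncurry fun (θ : ℝ) (η : E) => g (circleMap 0 1 θ • η))
      ((volume.restrict (Set.Ioc 0 (2 * Real.pi))).prod (ν.restrict S)) := by
  have hrot (θ : ℝ) : MeasurePreserving (fun η => circleMap 0 1 θ • η) (ν.restrict S)
      (ν.restrict S) := measurePreserving_const_smul_restrict hS (by simp)
  have hemb (θ : ℝ) : MeasurableEmbedding fun η : E => circleMap 0 1 θ • η :=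
    measurableEmbedding_const_smul₀ (circleMap_ne_center one_ne_zero)
  have hcont : ContinuousOn (Function.uncurry fun (θ : ℝ) (η : E) => g (circleMap 0 1 θ • η))
      (Set.Ioc 0 (2 * Real.pi) ×ˢ S) := by
    refine hg.comp (f := fun p : ℝ × E => circleMap 0 1 p.1 • p.2) ?_ fun p hp =>
      hS.smul_mem (by simp) hp.2
    have := continuous_circleMap 0 1
    fun_prop
  refine (integrable_prod_iff ?_).2 ⟨.of_forall fun θ => (hrot θ).integrable_comp_of_integrable hgi,
    ?_⟩
  · rw [Measure.prod_restrict]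
    exact hcont.aestronglyMeasurable (measurableSet_Ioc.prod hSm)
  · simp only [Function.uncurry_apply_pair, fun θ => (hrot θ).integral_comp (hemb θ) (‖g ·‖)]
    exact integrable_const _

theorem setIntegral_eq_of_balanced [NormedSpace ℂ F] [CompleteSpace F] (hS : Balanced ℂ S)
    (hSm : MeasurableSet S) {g : E → F} (hg : DifferentiableOn ℂ g S) (hgi : IntegrableOn g S ν) :
    ∫ η in S, g η ∂ν = ν.real S • g 0 := by
  have hrot (θ : ℝ) : ∫ η in S, g (circleMap 0 1 θ • η) ∂ν = ∫ η in S, g η ∂ν :=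
    (measurePreserving_const_smul_restrict hS (by simp)).integral_comp
      (measurableEmbedding_const_smul₀ (circleMap_ne_center one_ne_zero)) g
  calc ∫ η in S, g η ∂ν
      = (2 * Real.pi)⁻¹ • ∫ θ in Set.Ioc 0 (2 * Real.pi),
          ∫ η in S, g (circleMap 0 1 θ • η) ∂ν := by
        simp only [hrot, setIntegral_const, Real.volume_real_Ioc, sub_zero]
        rw [max_eq_left (by positivity), inv_smul_smul₀ (by positivity)]
    _ = ∫ η in S, Real.circleAverage (fun a : ℂ => g (a • η)) 0 1 ∂ν := by
        rw [integral_integral_swap (integrable_circleMap_smul hS hSm hg.continuousOn hgi),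
          ← integral_smul]
        simp only [Real.circleAverage, intervalIntegral.integral_of_le Real.two_pi_pos.le]
    _ = ν.real S • g 0 := by
        rw [setIntegral_congr_fun hSm fun η hη => circleAverage_apply_smul_eq hS hg hη,
          setIntegral_const]

end MeanValue

section AnisotropicBall

open scoped InnerProductSpace
open Module (finrank)

variable {E : Type*} [NormedAddCommGroup E] [InnerProductSpace ℂ E] {w z η : E} {c : ℝ}

/-- The anisotropic ball centred at a point `w` of the unit ball, comparable to a Bergman metric
ball of fixed radius. It is empty for `1 ≤ ‖w‖`. -/
def anisoBall (w : E) : Set E := {z | z - w ∈ anisoBox w (1 / 8 * (1 - ‖w‖ ^ 2))}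

theorem preimage_add_left_anisoBall (w : E) :
    (fun η => w + η) ⁻¹' anisoBall w = anisoBox w (1 / 8 * (1 - ‖w‖ ^ 2)) := by
  ext η
  rw [Set.mem_preimage, anisoBall, Set.mem_ofPred_eq, add_sub_cancel_left]

theorem isOpen_anisoBall (w : E) : IsOpen (anisoBall w) :=
  (isOpen_anisoBox w _).preimage (continuous_sub_right w)

theorem norm_center_lt_one_of_mem_anisoBall (hz : z ∈ anisoBall w) : ‖w‖ < 1 :=
  one_sub_norm_sq_pos_iff.1 (by linarith [hz.2, sq_nonneg ‖z - w‖])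

theorem le_one_sub_norm_add_sq (h1 : ‖⟪w, η⟫_ℂ‖ ≤ c) (h2 : ‖η‖ ^ 2 ≤ c) :
    1 - ‖w‖ ^ 2 - 3 * c ≤ 1 - ‖w + η‖ ^ 2 := by
  have h := norm_add_sq (𝕜 := ℂ) w η
  rw [RCLike.re_eq_complex_re] at h
  linarith [(re_le_norm ⟪w, η⟫_ℂ).trans h1]

theorem one_sub_norm_add_sq_le (h1 : ‖⟪w, η⟫_ℂ‖ ≤ c) :
    1 - ‖w + η‖ ^ 2 ≤ 1 - ‖w‖ ^ 2 + 2 * c := by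
  have h := norm_add_sq (𝕜 := ℂ) w η
  rw [RCLike.re_eq_complex_re] at h
  linarith [neg_le_of_abs_le ((abs_re_le_norm ⟪w, η⟫_ℂ).trans h1), sq_nonneg ‖η‖]

theorem le_one_sub_norm_sq_of_mem_anisoBall (hz : z ∈ anisoBall w) :
    5 / 8 * (1 - ‖w‖ ^ 2) ≤ 1 - ‖z‖ ^ 2 := by
  have h := le_one_sub_norm_add_sq hz.1.le hz.2.le
  rw [add_sub_cancel] at h
  linarith

theorem one_sub_norm_sq_le_of_mem_anisoBall (hz : z ∈ anisoBall w) :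
    1 - ‖z‖ ^ 2 ≤ 5 / 4 * (1 - ‖w‖ ^ 2) := by
  have h := one_sub_norm_add_sq_le hz.1.le
  rw [add_sub_cancel] at h
  linarith

theorem norm_lt_one_of_mem_anisoBall (hz : z ∈ anisoBall w) : ‖z‖ < 1 := by
  have hw := one_sub_norm_sq_pos_iff.2 (norm_center_lt_one_of_mem_anisoBall hz)
  exact one_sub_norm_sq_pos_iff.1 (by linarith [le_one_sub_norm_sq_of_mem_anisoBall hz])

theorem norm_one_sub_inner_le_of_mem_anisoBall (hz : z ∈ anisoBall w) :
    ‖1 - ⟪w, z⟫_ℂ‖ ≤ 9 / 8 * (1 - ‖w‖ ^ 2) := by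
  have hw := one_sub_norm_sq_pos_iff.2 (norm_center_lt_one_of_mem_anisoBall hz)
  calc ‖1 - ⟪w, z⟫_ℂ‖ = ‖((1 - ‖w‖ ^ 2 : ℝ) : ℂ) - ⟪w, z - w⟫_ℂ‖ := by
        rw [inner_sub_right, inner_self_eq_ofReal_norm_sq]
        push_cast
        ring_nf
    _ ≤ (1 - ‖w‖ ^ 2) + ‖⟪w, z - w⟫_ℂ‖ := by
        refine (norm_sub_le _ _).trans_eq ?_
        rw [Complex.norm_real, Real.norm_of_nonneg hw.le]
    _ ≤ 9 / 8 * (1 - ‖w‖ ^ 2) := by linarith [hz.1]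

theorem sub_mem_anisoBox_of_mem_anisoBall (hz : z ∈ anisoBall w) :
    w - z ∈ anisoBox z (1 - ‖z‖ ^ 2) := by
  have hw := one_sub_norm_sq_pos_iff.2 (norm_center_lt_one_of_mem_anisoBall hz)
  have hδ := le_one_sub_norm_sq_of_mem_anisoBall hz
  constructor
  · calc ‖⟪z, w - z⟫_ℂ‖ = ‖⟪w, z - w⟫_ℂ + ⟪z - w, z - w⟫_ℂ‖ := by
          rw [← inner_add_left, add_sub_cancel, ← neg_sub z w, inner_neg_right, norm_neg]
      _ ≤ ‖⟪w, z - w⟫_ℂ‖ + ‖z - w‖ ^ 2 := by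
          refine (norm_add_le _ _).trans_eq ?_
          rw [inner_self_eq_ofReal_norm_sq, Complex.norm_real, Real.norm_of_nonneg (sq_nonneg _)]
      _ < 1 - ‖z‖ ^ 2 := by linarith [hz.1, hz.2]
  · rw [norm_sub_rev]
    linarith [hz.2]

theorem closure_anisoBall_subset_ball (hw : ‖w‖ < 1) : closure (anisoBall w) ⊆ ball 0 1 := by
  have hclosed : IsClosed {z | ‖⟪w, z - w⟫_ℂ‖ ≤ 1 / 8 * (1 - ‖w‖ ^ 2) ∧
      ‖z - w‖ ^ 2 ≤ 1 / 8 * (1 - ‖w‖ ^ 2)} :=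
    (isClosed_le (f := fun z => ‖⟪w, z - w⟫_ℂ‖) (by fun_prop) continuous_const).inter
      (isClosed_le (f := fun z => ‖z - w‖ ^ 2) (by fun_prop) continuous_const)
  have hsub : anisoBall w ⊆ {z | ‖⟪w, z - w⟫_ℂ‖ ≤ 1 / 8 * (1 - ‖w‖ ^ 2) ∧
      ‖z - w‖ ^ 2 ≤ 1 / 8 * (1 - ‖w‖ ^ 2)} := fun z hz => ⟨hz.1.le, hz.2.le⟩
  refine (closure_minimal hsub hclosed).trans fun z hz => ?_
  have h := le_one_sub_norm_add_sq hz.1 hz.2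
  rw [add_sub_cancel] at h
  have hw' := one_sub_norm_sq_pos_iff.2 hw
  exact mem_ball_zero_iff.2 (one_sub_norm_sq_pos_iff.1 (by linarith))

theorem anisoBall_subset_ball (w : E) : anisoBall w ⊆ ball 0 1 := fun _ hz =>
  mem_ball_zero_iff.2 (norm_lt_one_of_mem_anisoBall hz)

theorem measurableSet_setOf_mem_anisoBall [SecondCountableTopology E] [MeasurableSpace E]
    [BorelSpace E] : MeasurableSet {p : E × E | p.1 ∈ anisoBall p.2} :=
  (measurableSet_lt (f := fun p : E × E => ‖⟪p.2, p.1 - p.2⟫_ℂ‖)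
    (g := fun p => 1 / 8 * (1 - ‖p.2‖ ^ 2)) (by fun_prop) (by fun_prop)).inter
    (measurableSet_lt (f := fun p : E × E => ‖p.1 - p.2‖ ^ 2)
      (g := fun p => 1 / 8 * (1 - ‖p.2‖ ^ 2)) (by fun_prop) (by fun_prop))

theorem measure_anisoBall_ne_top [ProperSpace E] [MeasurableSpace E] {ν : Measure E}
    [IsFiniteMeasureOnCompacts ν] (w : E) : ν (anisoBall w) ≠ ∞ :=
  ((measure_mono (anisoBall_subset_ball w)).trans_lt measure_ball_lt_top).ne

variable [FiniteDimensional ℂ E] [MeasurableSpace E] [BorelSpace E] {ν : Measure E}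
  [ν.IsAddHaarMeasure] {F : Type*} [NormedAddCommGroup F] {f : E → F}

theorem le_measure_anisoBall (hw : ‖w‖ < 1) :
    ENNReal.ofReal ((1 - ‖w‖ ^ 2) ^ (finrank ℂ E + 1)) * ν (ball 0 (1 / 8)) ≤ ν (anisoBall w) := by
  rw [← measure_preimage_add ν w (anisoBall w), preimage_add_left_anisoBall]
  exact le_measure_anisoBox ν hw (by norm_num)

theorem measure_anisoBall_ne_zero (hw : ‖w‖ < 1) : ν (anisoBall w) ≠ 0 := by
  have h1 := ENNReal.ofReal_pos.2 (pow_pos (one_sub_norm_sq_pos_iff.2 hw) (finrank ℂ E + 1))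
  exact ((ENNReal.mul_pos h1.ne' (measure_ball_pos ν 0 (by norm_num)).ne').trans_le
    (le_measure_anisoBall hw)).ne'

theorem integrableOn_anisoBall (hf : ContinuousOn f (ball 0 1)) (w : E) :
    IntegrableOn f (anisoBall w) ν := by
  rcases lt_or_ge ‖w‖ 1 with hw | hw
  · have hK : IsCompact (closure (anisoBall w)) :=
      (isBounded_ball.subset (anisoBall_subset_ball w)).isCompact_closure
    exact ((hf.mono (closure_anisoBall_subset_ball hw)).integrableOn_compact hK).mono_set
      subset_closure
  · have : anisoBall w = ∅ := Set.eq_empty_of_forall_notMem fun z hz =>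
      (norm_center_lt_one_of_mem_anisoBall hz).not_ge hw
    rw [this]
    exact integrableOn_empty

theorem setIntegral_anisoBall [NormedSpace ℂ F] [CompleteSpace F]
    (hf : DifferentiableOn ℂ f (ball 0 1)) (w : E) :
    ∫ z in anisoBall w, f z ∂ν = ν.real (anisoBall w) • f w := by
  have hshift := (measurePreserving_add_left ν w).restrict_preimage_emb
    (MeasurableEquiv.addLeft w).measurableEmbedding (anisoBall w)
  rw [preimage_add_left_anisoBall] at hshift
  have hball : Set.MapsTo (fun η => w + η) (anisoBox w (1 / 8 * (1 - ‖w‖ ^ 2))) (ball 0 1) :=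
    fun η hη => anisoBall_subset_ball w (by rwa [← preimage_add_left_anisoBall] at hη)
  have hmean := setIntegral_eq_of_balanced (ν := ν) (balanced_anisoBox w _)
    (isOpen_anisoBox w _).measurableSet (hf.comp (by fun_prop) hball)
    (hshift.integrable_comp_of_integrable (integrableOn_anisoBall hf.continuousOn w))
  rw [← hshift.integral_comp (MeasurableEquiv.addLeft w).measurableEmbedding]
  rw [Function.comp_apply, add_zero, ← preimage_add_left_anisoBall, measureReal_def,
    measure_preimage_add] at hmean
  rwa [← preimage_add_left_anisoBall]

theorem enorm_sq_le_lintegral_anisoBall [NormedSpace ℂ F] [CompleteSpace F]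
    (hf : DifferentiableOn ℂ f (ball 0 1)) (hw : ‖w‖ < 1) :
    ‖f w‖ₑ ^ 2 ≤ (ν (anisoBall w))⁻¹ * ∫⁻ z in anisoBall w, ‖f z‖ₑ ^ 2 ∂ν := by
  have h0 := measure_anisoBall_ne_zero (ν := ν) hw
  have htop := measure_anisoBall_ne_top (ν := ν) w
  have hfm := (integrableOn_anisoBall (ν := ν) hf.continuousOn w).1.enorm
  have hmean : ν (anisoBall w) * ‖f w‖ₑ ≤ ∫⁻ z in anisoBall w, ‖f z‖ₑ ∂ν := by
    refine le_of_eq_of_le ?_ (enorm_integral_le_lintegral_enorm _)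
    rw [setIntegral_anisoBall hf, enorm_smul, measureReal_def, Real.enorm_of_nonneg (by positivity),
      ENNReal.ofReal_toReal htop]
  have hCS : (∫⁻ z in anisoBall w, ‖f z‖ₑ ∂ν) ^ 2 ≤
      ν (anisoBall w) * ∫⁻ z in anisoBall w, ‖f z‖ₑ ^ 2 ∂ν := by
    simpa using lintegral_mul_sq_le (v := ν.restrict (anisoBall w)) aemeasurable_one hfm
  rw [← ENNReal.mul_le_iff_le_inv h0 htop, ← ENNReal.mul_le_mul_iff_right h0 htop, ← mul_assoc,
    ← sq, ← mul_pow]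
  exact (pow_le_pow_left' hmean 2).trans hCS

end AnisotropicBall

section Polar

open Module (finrank)

variable {E : Type*} [NormedAddCommGroup E] [NormedSpace ℝ E] [FiniteDimensional ℝ E]
  [MeasurableSpace E] [BorelSpace E] [Nontrivial E] (ν : Measure E) [ν.IsAddHaarMeasure]
  {f g : E → ℝ≥0∞} {C : ℝ≥0∞}

theorem lintegral_eq_lintegral_toSphere (hf : Measurable f) :
    ∫⁻ x, f x ∂ν = ∫⁻ ζ : sphere (0 : E) 1, (∫⁻ r in Set.Ioi (0 : ℝ),
      ENNReal.ofReal (r ^ (finrank ℝ E - 1)) * f (r • (ζ : E))) ∂ν.toSphere := by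
  set k := finrank ℝ E - 1
  have hmeas : Measurable fun p : sphere (0 : E) 1 × Set.Ioi (0 : ℝ) => f ((p.2 : ℝ) • (p.1 : E)) :=
    hf.comp (by fun_prop : Continuous fun p : sphere (0 : E) 1 × Set.Ioi (0 : ℝ) =>
      (p.2 : ℝ) • (p.1 : E)).measurable
  calc ∫⁻ x, f x ∂ν = ∫⁻ x : ({(0)}ᶜ : Set E), f x ∂(ν.comap (↑)) := by
        rw [lintegral_subtype_comap (measurableSet_singleton _).compl, restrict_compl_singleton]
    _ = ∫⁻ p, f ((p.2 : ℝ) • (p.1 : E)) ∂ν.toSphere.prod (.volumeIoiPow k) := by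
        rw [← ν.measurePreserving_homeomorphUnitSphereProd.lintegral_comp hmeas]
        refine lintegral_congr fun x => ?_
        have hx : ‖(x : E)‖ ≠ 0 := norm_ne_zero_iff.2 x.2
        simp [smul_smul, mul_inv_cancel₀ hx]
    _ = _ := by
        rw [lintegral_prod _ hmeas.aemeasurable]
        refine lintegral_congr fun ζ => ?_
        have hζ : Measurable fun r : Set.Ioi (0 : ℝ) => f ((r : ℝ) • (ζ : E)) :=
          hmeas.comp measurable_prodMk_left
        rw [Measure.volumeIoiPow]
        exact (lintegral_withDensity_eq_lintegral_mul _ (by fun_prop) hζ).trans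
          (lintegral_subtype_comap measurableSet_Ioi
            fun r : ℝ => ENNReal.ofReal (r ^ k) * f (r • (ζ : E)))

theorem lintegral_le_of_forall_ray (hf : Measurable f) (hg : Measurable g) (hC : C ≠ ∞)
    (h : ∀ ζ : E, ‖ζ‖ = 1 →
      ∫⁻ r in Set.Ioi (0 : ℝ), ENNReal.ofReal (r ^ (finrank ℝ E - 1)) * f (r • ζ) ≤
        C * ∫⁻ r in Set.Ioi (0 : ℝ), ENNReal.ofReal (r ^ (finrank ℝ E - 1)) * g (r • ζ)) :
    ∫⁻ x, f x ∂ν ≤ C * ∫⁻ x, g x ∂ν := by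
  rw [lintegral_eq_lintegral_toSphere ν hf, lintegral_eq_lintegral_toSphere ν hg,
    ← lintegral_const_mul' _ _ hC]
  exact lintegral_mono fun ζ => h ζ (mem_sphere_zero_iff_norm.1 ζ.2)

end Polar

section Radial

variable {α σ s : ℝ}

theorem setLIntegral_one_sub_rpow (hα : -1 < α) (hσ : 0 ≤ σ) :
    ∫⁻ r in Set.Ioo (1 - σ) 1, ENNReal.ofReal ((1 - r) ^ α) =
      ENNReal.ofReal (σ ^ (α + 1) / (α + 1)) := by
  have h_int : IntervalIntegrable (fun r : ℝ => (1 - r) ^ α) volume (1 - σ) 1 := by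
    simpa using ((intervalIntegral.intervalIntegrable_rpow' hα (a := 0) (b := σ)).comp_sub_left
      1).symm
  rw [Measure.restrict_congr_set Ioo_ae_eq_Ioc, ← ofReal_integral_eq_lintegral_ofReal,
    ← intervalIntegral.integral_of_le (by linarith)]
  · rw [intervalIntegral.integral_comp_sub_left (fun t : ℝ => t ^ α) 1, sub_self, sub_sub_cancel,
      integral_rpow (Or.inl hα), Real.zero_rpow (by linarith), sub_zero]
  · exact h_int.1
  · exact ae_restrict_of_forall_mem measurableSet_Ioc fun t ht =>
      Real.rpow_nonneg (by linarith [ht.2]) _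

theorem le_setLIntegral_pow (k : ℕ) (hσ0 : 0 ≤ σ) (hσ1 : σ ≤ 1) :
    ENNReal.ofReal (σ / (k + 1)) ≤ ∫⁻ r in Set.Ioo (1 - σ) 1, ENNReal.ofReal (r ^ k) := by
  have hpow : (1 - σ) ^ (k + 1) ≤ 1 - σ :=
    pow_le_of_le_one (sub_nonneg.2 hσ1) (sub_le_self 1 hσ0) k.succ_ne_zero
  rw [Measure.restrict_congr_set Ioo_ae_eq_Ioc, ← ofReal_integral_eq_lintegral_ofReal,
    ← intervalIntegral.integral_of_le (by linarith), integral_pow, one_pow]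
  · gcongr
    linarith
  · exact (intervalIntegral.intervalIntegrable_pow k).1
  · exact ae_restrict_of_forall_mem measurableSet_Ioc fun t ht =>
      pow_nonneg (by linarith [ht.1]) _

theorem one_sub_sq_rpow_le {r : ℝ} (hr0 : 0 ≤ r) (hr1 : r ≤ 1) (α : ℝ) :
    (1 - r ^ 2) ^ α ≤ 2 ^ |α| * (1 - r) ^ α := by
  rw [show 1 - r ^ 2 = (1 + r) * (1 - r) by ring, Real.mul_rpow (by linarith) (by linarith)]
  have hα : (1 + r) ^ α ≤ 2 ^ |α| :=
    (Real.rpow_le_rpow_of_exponent_le (by linarith) (le_abs_self α)).trans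
      (Real.rpow_le_rpow (by linarith) (by linarith) (abs_nonneg α))
  exact mul_le_mul_of_nonneg_right hα (Real.rpow_nonneg (by linarith) _)

theorem setOf_norm_one_sub_mul_lt_subset_Ioo {l : ℂ} (hl : ‖l‖ ≤ 1) :
    {r : ℝ | r ∈ Set.Ioo (0 : ℝ) 1 ∧ ‖1 - r * l‖ < s} ⊆ Set.Ioo (1 - min s 1) 1 := by
  rintro r ⟨hr, hrs⟩
  have htri := norm_sub_norm_le (1 : ℂ) (r * l)
  rw [norm_one, norm_mul, norm_real, Real.norm_of_nonneg hr.1.le] at htri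
  have hlt : 1 - r < min s 1 := lt_min (by nlinarith [hr.1]) (by linarith [hr.1])
  exact ⟨by linarith, hr.2⟩

theorem Ioo_subset_setOf_norm_one_sub_mul_lt {l : ℂ} (hl : ‖l‖ ≤ 1)
    (hne : {r : ℝ | r ∈ Set.Ioo (0 : ℝ) 1 ∧ ‖1 - r * l‖ < s}.Nonempty) :
    Set.Ioo (1 - min s 1) 1 ⊆ {r : ℝ | r ∈ Set.Ioo (0 : ℝ) 1 ∧ ‖1 - r * l‖ < 2 * s} := by
  obtain ⟨r₀, hr₀⟩ := hne
  have hr₀' := setOf_norm_one_sub_mul_lt_subset_Ioo hl hr₀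
  intro r hr
  refine ⟨⟨by linarith [hr.1, min_le_right s 1], hr.2⟩, ?_⟩
  have hdist : ‖((r₀ - r : ℝ) : ℂ) * l‖ < s := by
    rw [norm_mul, norm_real]
    refine (mul_le_of_le_one_right (norm_nonneg _) hl).trans_lt
      (lt_of_lt_of_le ?_ (min_le_left s 1))
    exact abs_lt.2 ⟨by linarith [hr₀'.1, hr.2], by linarith [hr₀'.2, hr.1]⟩
  rw [show 1 - r * l = (1 - r₀ * l) + ((r₀ - r : ℝ) : ℂ) * l by push_cast; ring]
  linarith [norm_add_le (1 - r₀ * l) (((r₀ - r : ℝ) : ℂ) * l), hr₀.2]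

theorem setLIntegral_ray_le (k : ℕ) (hα : -1 < α) (hs : 0 < s) {l : ℂ} (hl : ‖l‖ ≤ 1) :
    ∫⁻ r in {r : ℝ | r ∈ Set.Ioo (0 : ℝ) 1 ∧ ‖1 - r * l‖ < s},
        ENNReal.ofReal (r ^ k) * ENNReal.ofReal ((1 - r ^ 2) ^ α) ≤
      ENNReal.ofReal (2 ^ |α| * (k + 1) / (α + 1) * min s 1 ^ α) *
        ∫⁻ r in {r : ℝ | r ∈ Set.Ioo (0 : ℝ) 1 ∧ ‖1 - r * l‖ < 2 * s},
          ENNReal.ofReal (r ^ k) := by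
  rcases Set.eq_empty_or_nonempty {r : ℝ | r ∈ Set.Ioo (0 : ℝ) 1 ∧ ‖1 - r * l‖ < s}
    with hempty | hne
  · rw [hempty, Measure.restrict_empty, lintegral_zero_measure]
    exact zero_le
  have hsub := setOf_norm_one_sub_mul_lt_subset_Ioo (s := s) hl
  have hsup := Ioo_subset_setOf_norm_one_sub_mul_lt hl hne
  set σ := min s 1
  have hσ0 : 0 < σ := lt_min hs one_pos
  have hα1 : 0 < α + 1 := by linarith
  calc _ ≤ ∫⁻ r in Set.Ioo (1 - σ) 1, ENNReal.ofReal (2 ^ |α|) * ENNReal.ofReal ((1 - r) ^ α) := by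
        refine (lintegral_mono_set hsub).trans (setLIntegral_mono' measurableSet_Ioo fun r hr => ?_)
        have hr0 : 0 ≤ r := (hsup hr).1.1.le
        rw [← ENNReal.ofReal_mul (p := 2 ^ |α|) (by positivity)]
        refine (mul_le_of_le_one_left' ?_).trans
          (ENNReal.ofReal_le_ofReal (one_sub_sq_rpow_le hr0 hr.2.le α))
        exact ENNReal.ofReal_le_one.2 (pow_le_one₀ hr0 hr.2.le)
    _ = ENNReal.ofReal (2 ^ |α| * (k + 1) / (α + 1) * σ ^ α) * ENNReal.ofReal (σ / (k + 1)) := by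
        rw [lintegral_const_mul' _ _ ENNReal.ofReal_ne_top, setLIntegral_one_sub_rpow hα hσ0.le,
          ← ENNReal.ofReal_mul (by positivity), ← ENNReal.ofReal_mul (by positivity),
          Real.rpow_add_one hσ0.ne']
        congr 1
        field_simp
    _ ≤ _ := mul_le_mul_right
        ((le_setLIntegral_pow k hσ0.le (min_le_right s 1)).trans (lintegral_mono_set hsup)) _

end Radial

section LayerCake

variable {X : Type*} [MeasurableSpace X] {m : Measure X} {f : X → ℝ} {A : ℝ≥0∞} {c p N : ℝ}

theorem lintegral_Ioi_rpow (hN : 0 < N) (hc : 0 < c) :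
    ∫⁻ s in Set.Ioi c, ENNReal.ofReal (s ^ (-N - 1)) = ENNReal.ofReal (N⁻¹ * c ^ (-N)) := by
  rw [← ofReal_integral_eq_lintegral_ofReal (integrableOn_Ioi_rpow_of_lt (by linarith) hc)
    (ae_restrict_of_forall_mem measurableSet_Ioi fun s hs => Real.rpow_nonneg (hc.trans hs).le _),
    integral_Ioi_rpow_of_lt (by linarith) hc, sub_add_cancel, neg_div_neg_eq, div_eq_inv_mul]

theorem lintegral_rpow_neg_eq [SFinite m] (hf : Measurable f) (hN : 0 < N) (hc : 0 < c)
    (hcf : ∀ᵐ x ∂m, c ≤ f x) :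
    ∫⁻ x, ENNReal.ofReal (f x ^ (-N)) ∂m =
      ENNReal.ofReal N * ∫⁻ s in Set.Ioi c, ENNReal.ofReal (s ^ (-N - 1)) * m {x | f x < s} := by
  set K : X → ℝ → ℝ≥0∞ := fun x => (Set.Ioi (f x)).indicator fun s => ENNReal.ofReal (s ^ (-N - 1))
  have hK : Measurable (Function.uncurry K) :=
    (measurable_snd.pow_const _).ennreal_ofReal.indicator
      (measurableSet_lt (hf.comp measurable_fst) measurable_snd)
  calc _ = ∫⁻ x, ENNReal.ofReal N * (∫⁻ s in Set.Ioi c, K x s) ∂m := by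
        refine lintegral_congr_ae (hcf.mono fun x hx => ?_)
        dsimp only [K]
        rw [setLIntegral_indicator measurableSet_Ioi,
          Set.inter_eq_self_of_subset_left (Set.Ioi_subset_Ioi hx),
          lintegral_Ioi_rpow hN (hc.trans_le hx), ← ENNReal.ofReal_mul hN.le,
          mul_inv_cancel_left₀ hN.ne']
    _ = ENNReal.ofReal N * ∫⁻ s in Set.Ioi c, (∫⁻ x, K x s ∂m) := by
        rw [lintegral_const_mul' _ _ ENNReal.ofReal_ne_top,
          lintegral_lintegral_swap hK.aemeasurable]
    _ = _ := by
        congr 1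
        exact lintegral_congr fun s =>
          lintegral_indicator_const (measurableSet_lt hf measurable_const) _

theorem lintegral_rpow_neg_le [SFinite m] (hf : Measurable f) (hA : A ≠ ∞) (hp : 0 < p)
    (hpN : p < N) (hc : 0 < c) (hcf : ∀ᵐ x ∂m, c ≤ f x)
    (hm : ∀ s, 0 < s → m {x | f x < s} ≤ A * ENNReal.ofReal (s ^ p)) :
    ∫⁻ x, ENNReal.ofReal (f x ^ (-N)) ∂m ≤
      A * ENNReal.ofReal (N / (N - p) * c ^ (p - N)) := by
  have hN := hp.trans hpN
  calc _ ≤ ENNReal.ofReal N *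
        ∫⁻ s in Set.Ioi c, A * ENNReal.ofReal (s ^ (-(N - p) - 1)) := by
        rw [lintegral_rpow_neg_eq hf hN hc hcf]
        refine mul_le_mul_right (setLIntegral_mono' measurableSet_Ioi fun s hs => ?_) _
        have hs : 0 < s := hc.trans hs
        refine (mul_le_mul_right (hm s hs) _).trans_eq ?_
        rw [mul_left_comm, ← ENNReal.ofReal_mul (by positivity), ← Real.rpow_add hs]
        ring_nf
    _ = _ := by
        rw [lintegral_const_mul' _ _ hA, lintegral_Ioi_rpow (by linarith) hc, mul_left_comm,
          ← ENNReal.ofReal_mul hN.le, neg_sub, div_eq_mul_inv, mul_assoc]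

end LayerCake

section WeightedMeas

variable {E : Type*} [NormedAddCommGroup E] [MeasurableSpace E] [BorelSpace E]

/-- The measure `(1 - ‖z‖²) ^ β dν` on the unit ball. -/
def weightedMeas (ν : Measure E) (β : ℝ) : Measure E :=
  (ν.restrict (ball 0 1)).withDensity fun z => ENNReal.ofReal ((1 - ‖z‖ ^ 2) ^ β)

theorem lintegral_weightedMeas (ν : Measure E) (β : ℝ) (f : E → ℝ≥0∞) :
    ∫⁻ z, f z ∂weightedMeas ν β =
      ∫⁻ z in ball 0 1, ENNReal.ofReal ((1 - ‖z‖ ^ 2) ^ β) * f z ∂ν :=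
  lintegral_withDensity_eq_lintegral_mul_non_measurable _ (by fun_prop)
    (Eventually.of_forall fun _ => ENNReal.ofReal_lt_top) f

theorem setLIntegral_weightedMeas (ν : Measure E) (β : ℝ) {s : Set E} (hs : MeasurableSet s)
    (hsub : s ⊆ ball 0 1) (f : E → ℝ≥0∞) :
    ∫⁻ z in s, f z ∂weightedMeas ν β =
      ∫⁻ z in s, ENNReal.ofReal ((1 - ‖z‖ ^ 2) ^ β) * f z ∂ν := by
  rw [← lintegral_indicator hs, lintegral_weightedMeas]
  simp_rw [← Set.indicator_mul_right s fun z => ENNReal.ofReal ((1 - ‖z‖ ^ 2) ^ β)]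
  rw [setLIntegral_indicator hs, Set.inter_eq_self_of_subset_left hsub]

instance (ν : Measure E) [SFinite ν] (β : ℝ) : SFinite (weightedMeas ν β) := by
  unfold weightedMeas
  infer_instance

theorem ae_norm_lt_one_weightedMeas (ν : Measure E) (β : ℝ) :
    ∀ᵐ z ∂weightedMeas ν β, ‖z‖ < 1 :=
  (withDensity_absolutelyContinuous _ _).ae_le
    (ae_restrict_of_forall_mem measurableSet_ball fun _ => mem_ball_zero_iff.1)

end WeightedMeas

section ForelliRudin

open scoped InnerProductSpace
open Module (finrank)

variable {E : Type*} [NormedAddCommGroup E] [InnerProductSpace ℂ E] {a w : E} {s α N : ℝ}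

theorem one_sub_norm_le_norm_one_sub_inner (hw : ‖w‖ ≤ 1) : 1 - ‖a‖ ≤ ‖1 - ⟪a, w⟫_ℂ‖ := by
  have h := norm_sub_norm_le (1 : ℂ) ⟪a, w⟫_ℂ
  rw [norm_one] at h
  linarith [(norm_inner_le_norm (𝕜 := ℂ) a w).trans (mul_le_of_le_one_right (norm_nonneg a) hw)]

theorem one_sub_norm_sq_le_two_mul_norm_one_sub_inner (hw : ‖w‖ ≤ 1) :
    1 - ‖a‖ ^ 2 ≤ 2 * ‖1 - ⟪a, w⟫_ℂ‖ := by
  nlinarith [one_sub_norm_le_norm_one_sub_inner (a := a) hw, sq_nonneg (1 - ‖a‖)]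

theorem sub_mem_anisoBox_of_norm_one_sub_inner_lt (hw : ‖w‖ ≤ 1)
    (h : ‖1 - ⟪a, w⟫_ℂ‖ < s) (ha : ‖a‖ ≤ 1) : w - a ∈ anisoBox a (3 * s) := by
  have ha2 := one_sub_norm_sq_le_two_mul_norm_one_sub_inner (a := a) hw
  constructor
  · have hsplit : ⟪a, w - a⟫_ℂ = ((1 - ‖a‖ ^ 2 : ℝ) : ℂ) - (1 - ⟪a, w⟫_ℂ) := by
      rw [inner_sub_right, inner_self_eq_ofReal_norm_sq]
      push_cast
      ring
    rw [hsplit]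
    refine (norm_sub_le _ _).trans_lt ?_
    rw [norm_real, Real.norm_of_nonneg (by nlinarith [norm_nonneg a])]
    linarith
  · have hre := re_le_norm (1 - ⟪a, w⟫_ℂ)
    rw [sub_re, one_re] at hre
    have hexp := norm_sub_sq (𝕜 := ℂ) w a
    rw [inner_re_symm (𝕜 := ℂ), RCLike.re_eq_complex_re] at hexp
    nlinarith [norm_nonneg a, norm_nonneg w]

/-- The Carleson tube `{w ∈ 𝔹 : |1 - ⟨w, a⟩| < s}`. -/
def carlesonTube (a : E) (s : ℝ) : Set E := {w | w ∈ ball 0 1 ∧ ‖1 - ⟪a, w⟫_ℂ‖ < s}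

theorem smul_mem_carlesonTube_iff {ζ : E} (hζ : ‖ζ‖ = 1) {r : ℝ} (hr : 0 < r) :
    r • ζ ∈ carlesonTube a s ↔ r ∈ Set.Ioo (0 : ℝ) 1 ∧ ‖1 - r * ⟪a, ζ⟫_ℂ‖ < s := by
  rw [carlesonTube, Set.mem_ofPred_eq, mem_ball_zero_iff, norm_smul, hζ, mul_one,
    Real.norm_of_nonneg hr.le, Set.mem_Ioo, ← coe_smul, inner_smul_right]
  simp only [hr, true_and]

theorem carlesonTube_two_mul_subset (ha : ‖a‖ ≤ 1) :
    carlesonTube a (2 * s) ⊆ carlesonTube a (2 * min s 1) := by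
  rintro w ⟨hw, hlt⟩
  have htri := norm_sub_le (1 : ℂ) ⟪a, w⟫_ℂ
  rw [norm_one] at htri
  rw [mem_ball_zero_iff] at hw
  refine ⟨mem_ball_zero_iff.2 hw, ?_⟩
  rw [mul_min_of_nonneg _ _ zero_le_two, lt_min_iff]
  exact ⟨hlt, by linarith [norm_inner_le_norm_of_norm_le_one ha w]⟩

theorem setLIntegral_indicator_carlesonTube_smul {ζ : E} (hζ : ‖ζ‖ = 1) (a : E) (s : ℝ)
    (k : ℝ → ℝ≥0∞) (f : E → ℝ≥0∞) :
    ∫⁻ r in Set.Ioi (0 : ℝ), k r * (carlesonTube a s).indicator f (r • ζ) =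
      ∫⁻ r in {r : ℝ | r ∈ Set.Ioo (0 : ℝ) 1 ∧ ‖1 - r * ⟪a, ζ⟫_ℂ‖ < s}, k r * f (r • ζ) := by
  have hmeas : MeasurableSet {r : ℝ | r ∈ Set.Ioo (0 : ℝ) 1 ∧ ‖1 - r * ⟪a, ζ⟫_ℂ‖ < s} :=
    measurableSet_Ioo.inter (measurableSet_lt
      (by fun_prop : Continuous fun r : ℝ => ‖1 - r * ⟪a, ζ⟫_ℂ‖).measurable measurable_const)
  rw [← lintegral_indicator measurableSet_Ioi, ← lintegral_indicator hmeas]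
  refine lintegral_congr fun r => ?_
  rcases le_or_gt r 0 with hr | hr
  · rw [Set.indicator_of_notMem (Set.notMem_Ioi.2 hr),
      Set.indicator_of_notMem fun h => hr.not_gt h.1.1]
  · classical
    simp only [Set.indicator_apply, Set.mem_Ioi, hr, if_true, smul_mem_carlesonTube_iff hζ hr,
      Set.mem_ofPred_eq, mul_ite, mul_zero]

variable [MeasurableSpace E] [BorelSpace E]

theorem measurable_norm_one_sub_inner (a : E) : Measurable fun w : E => ‖1 - ⟪a, w⟫_ℂ‖ :=
  (by fun_prop : Continuous fun w : E => ‖1 - ⟪a, w⟫_ℂ‖).measurable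

theorem measurableSet_carlesonTube (a : E) (s : ℝ) : MeasurableSet (carlesonTube a s) :=
  measurableSet_ball.inter (measurableSet_lt (measurable_norm_one_sub_inner a) measurable_const)

variable [FiniteDimensional ℂ E] (ν : Measure E) [ν.IsAddHaarMeasure]

theorem measure_carlesonTube_le (ha : ‖a‖ ≤ 1) :
    ν (carlesonTube a s) ≤ ENNReal.ofReal ((3 * s) ^ (finrank ℂ E + 1)) * ν (ball 0 2) := by
  rcases Set.eq_empty_or_nonempty (carlesonTube a s) with hempty | ⟨w₀, hw₀, hs₀⟩
  · rw [hempty, measure_empty]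
    exact zero_le
  have ha2 := one_sub_norm_sq_le_two_mul_norm_one_sub_inner (a := a) (mem_ball_zero_iff.1 hw₀).le
  calc _ ≤ ν ((fun w => w + -a) ⁻¹' anisoBox a (3 * s)) := measure_mono fun w hw => by
        rw [Set.mem_preimage, ← sub_eq_add_neg]
        exact sub_mem_anisoBox_of_norm_one_sub_inner_lt (mem_ball_zero_iff.1 hw.1).le hw.2 ha
    _ = ν (anisoBox a (3 * s)) := measure_preimage_add_right _ _ _
    _ ≤ _ := measure_anisoBox_le ν (by linarith [norm_nonneg (1 - ⟪a, w₀⟫_ℂ)])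

variable [Nontrivial E]

theorem weightedMeas_carlesonTube_le_measure (hα : -1 < α) (ha : ‖a‖ ≤ 1) (hs : 0 < s) :
    weightedMeas ν α (carlesonTube a s) ≤
      ENNReal.ofReal (2 ^ |α| * ((finrank ℝ E - 1 : ℕ) + 1) / (α + 1) * min s 1 ^ α) *
        ν (carlesonTube a (2 * s)) := by
  have hmeas := measurableSet_carlesonTube a s
  have hmeas2 := measurableSet_carlesonTube a (2 * s)
  calc _ = ∫⁻ w, (carlesonTube a s).indicator
        (fun w => ENNReal.ofReal ((1 - ‖w‖ ^ 2) ^ α)) w ∂ν := by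
        rw [weightedMeas, withDensity_apply _ hmeas, Measure.restrict_restrict hmeas,
          Set.inter_eq_self_of_subset_left fun w hw => hw.1, lintegral_indicator hmeas]
    _ ≤ ENNReal.ofReal (2 ^ |α| * ((finrank ℝ E - 1 : ℕ) + 1) / (α + 1) * min s 1 ^ α) *
        ∫⁻ w, (carlesonTube a (2 * s)).indicator 1 w ∂ν := by
        refine lintegral_le_of_forall_ray ν ((by fun_prop : Measurable fun w : E =>
          ENNReal.ofReal ((1 - ‖w‖ ^ 2) ^ α)).indicator hmeas) (measurable_one.indicator hmeas2)
          ENNReal.ofReal_ne_top fun ζ hζ => ?_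
        rw [setLIntegral_indicator_carlesonTube_smul hζ,
          setLIntegral_indicator_carlesonTube_smul hζ]
        simpa only [norm_smul, hζ, mul_one, Pi.one_apply, Real.norm_eq_abs, sq_abs] using
          setLIntegral_ray_le (finrank ℝ E - 1) hα hs
            ((norm_inner_le_norm a ζ).trans (by rwa [hζ, mul_one]))
    _ = _ := by rw [lintegral_indicator_one hmeas2]

theorem exists_weightedMeas_carlesonTube_le (hα : -1 < α) :
    ∃ C : ℝ≥0∞, C ≠ ∞ ∧ ∀ (a : E) (s : ℝ), ‖a‖ ≤ 1 → 0 < s →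
      weightedMeas ν α (carlesonTube a s) ≤
        C * ENNReal.ofReal (s ^ (finrank ℂ E + 1 + α)) := by
  set K : ℝ := 2 ^ |α| * ((finrank ℝ E - 1 : ℕ) + 1) / (α + 1)
  have hα1 : 0 < α + 1 := by linarith
  have : 0 ≤ K := by positivity
  refine ⟨ENNReal.ofReal (K * 6 ^ (finrank ℂ E + 1)) * ν (ball 0 2),
    ENNReal.mul_ne_top ENNReal.ofReal_ne_top measure_ball_lt_top.ne, fun a s ha hs => ?_⟩
  set σ := min s 1
  have hσ : 0 < σ := lt_min hs one_pos
  have hpow : σ ^ α * (3 * (2 * σ)) ^ (finrank ℂ E + 1) ≤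
      6 ^ (finrank ℂ E + 1) * s ^ (finrank ℂ E + 1 + α) :=
    calc _ = 6 ^ (finrank ℂ E + 1) * σ ^ (finrank ℂ E + 1 + α) := by
          rw [Real.rpow_add hσ, ← Nat.cast_add_one, Real.rpow_natCast]
          ring
      _ ≤ _ := by
          gcongr
          · linarith [(finrank ℂ E).cast_nonneg (α := ℝ)]
          · exact min_le_left s 1
  calc _ ≤ ENNReal.ofReal (K * σ ^ α) * ν (carlesonTube a (2 * s)) :=
        weightedMeas_carlesonTube_le_measure ν hα ha hs
    _ ≤ ENNReal.ofReal (K * σ ^ α) *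
        (ENNReal.ofReal ((3 * (2 * σ)) ^ (finrank ℂ E + 1)) * ν (ball 0 2)) := by
        gcongr
        exact (measure_mono (carlesonTube_two_mul_subset ha)).trans (measure_carlesonTube_le ν ha)
    _ = ENNReal.ofReal (K * (σ ^ α * (3 * (2 * σ)) ^ (finrank ℂ E + 1))) * ν (ball 0 2) := by
        rw [← mul_assoc, ← ENNReal.ofReal_mul (by positivity), mul_assoc]
    _ ≤ ENNReal.ofReal (K * (6 ^ (finrank ℂ E + 1) * s ^ (finrank ℂ E + 1 + α))) *
        ν (ball 0 2) := by gcongr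
    _ = _ := by rw [← mul_assoc, ENNReal.ofReal_mul (by positivity), mul_right_comm]

theorem exists_lintegral_norm_one_sub_inner_rpow_neg_le (hα : -1 < α)
    (hN : finrank ℂ E + 1 + α < N) :
    ∃ C : ℝ≥0∞, C ≠ ∞ ∧ ∀ a : E, ‖a‖ < 1 →
      ∫⁻ w, ENNReal.ofReal (‖1 - ⟪a, w⟫_ℂ‖ ^ (-N)) ∂weightedMeas ν α ≤
        C * ENNReal.ofReal ((1 - ‖a‖ ^ 2) ^ (finrank ℂ E + 1 + α - N)) := by
  obtain ⟨A, hA, hmeas⟩ := exists_weightedMeas_carlesonTube_le ν hα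
  set p := finrank ℂ E + 1 + α with hp
  have hp0 : 0 < p := by
    rw [hp, add_assoc]
    exact add_pos_of_nonneg_of_pos (Nat.cast_nonneg _) (by linarith)
  refine ⟨A * ENNReal.ofReal (N / (N - p) * 2⁻¹ ^ (p - N)), by finiteness, fun a ha => ?_⟩
  have hδ := one_sub_norm_sq_pos_iff.2 ha
  have hNp : 0 ≤ N / (N - p) := div_nonneg (hp0.trans hN).le (by linarith)
  have hball := ae_norm_lt_one_weightedMeas ν α
  refine (lintegral_rpow_neg_le (measurable_norm_one_sub_inner a) hA hp0 hN (half_pos hδ)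
    (hball.mono fun w hw => ?_) fun s hs => ?_).trans_eq ?_
  · linarith [one_sub_norm_sq_le_two_mul_norm_one_sub_inner (a := a) hw.le]
  · refine (measure_mono_ae ?_).trans (hmeas a s ha.le hs)
    exact hball.mono fun w hw hlt => ⟨mem_ball_zero_iff.2 hw, hlt⟩
  · rw [mul_assoc, ← ENNReal.ofReal_mul (by positivity), div_eq_inv_mul (1 - ‖a‖ ^ 2),
      Real.mul_rpow (by positivity) hδ.le, mul_assoc]

end ForelliRudin

section SchurTest

variable {X Y : Type*} [MeasurableSpace X] [MeasurableSpace Y] {μ : Measure X} {ν : Measure Y}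
  [SFinite ν] {A : X → Set Y} {ω : X → ℝ≥0∞} {φ : Y → ℝ≥0∞} {C : ℝ≥0∞} {p : ℝ}

theorem aemeasurable_setLIntegral_of_measurableSet
    (hA : MeasurableSet {y : Y × X | y.1 ∈ A y.2}) (hφ : AEMeasurable φ ν) :
    AEMeasurable (fun x => ∫⁻ y in A x, φ y ∂ν) μ := by
  have hind : AEMeasurable ({y : X × Y | y.2 ∈ A y.1}.indicator fun y => φ y.2) (μ.prod ν) :=
    hφ.comp_snd.indicator (measurable_swap hA)
  refine hind.lintegral_prod_right'.congr (Eventually.of_forall fun x => ?_)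
  exact lintegral_indicator (measurable_prodMk_right hA) φ

variable [SFinite μ]

theorem lintegral_mul_setLIntegral_le (hA : MeasurableSet {y : Y × X | y.1 ∈ A y.2})
    (hω : AEMeasurable ω μ) (hφ : AEMeasurable φ ν)
    (hC : ∀ y, ∫⁻ x in {x | y ∈ A x}, ω x ∂μ ≤ C) :
    ∫⁻ x, ω x * ∫⁻ y in A x, φ y ∂ν ∂μ ≤ C * ∫⁻ y, φ y ∂ν := by
  have hK : AEMeasurable (Function.uncurry fun x y => ω x * (A x).indicator φ y) (μ.prod ν) :=
    hω.comp_fst.mul (hφ.comp_snd.indicator (measurable_swap hA))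
  calc _ = ∫⁻ x, ∫⁻ y, ω x * (A x).indicator φ y ∂ν ∂μ := by
        refine lintegral_congr fun x => ?_
        have hAx : MeasurableSet (A x) := measurable_prodMk_right hA
        rw [lintegral_const_mul'' _ (hφ.indicator hAx), lintegral_indicator hAx]
    _ = ∫⁻ y, ∫⁻ x, {x | y ∈ A x}.indicator ω x * φ y ∂μ ∂ν := by
        rw [lintegral_lintegral_swap hK]
        refine lintegral_congr fun y => lintegral_congr fun x => ?_
        by_cases h : y ∈ A x <;> simp [h]
    _ ≤ ∫⁻ y, C * φ y ∂ν := by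
        refine lintegral_mono fun y => ?_
        have hAy : MeasurableSet {x | y ∈ A x} := measurable_prodMk_left hA
        dsimp only
        rw [lintegral_mul_const'' _ (hω.indicator hAy), lintegral_indicator hAy]
        exact mul_le_mul_left (hC y) _
    _ = C * ∫⁻ y, φ y ∂ν := lintegral_const_mul'' _ hφ

theorem lintegral_mul_setLIntegral_rpow_le (hA : MeasurableSet {y : Y × X | y.1 ∈ A y.2})
    (hω : AEMeasurable ω μ) (hφ : AEMeasurable φ ν)
    (hC : ∀ y, ∫⁻ x in {x | y ∈ A x}, ω x ∂μ ≤ C) (hp : 1 ≤ p) :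
    ∫⁻ x, ω x * (∫⁻ y in A x, φ y ∂ν) ^ p ∂μ ≤ C * (∫⁻ y, φ y ∂ν) ^ p := by
  have hsplit (t : ℝ≥0∞) : t ^ p = t ^ (p - 1) * t := by
    nth_rw 3 [← ENNReal.rpow_one t]
    rw [← ENNReal.rpow_add_of_nonneg _ _ (by linarith) zero_le_one, sub_add_cancel]
  calc _ ≤ ∫⁻ x, (∫⁻ y, φ y ∂ν) ^ (p - 1) * (ω x * ∫⁻ y in A x, φ y ∂ν) ∂μ := by
        refine lintegral_mono fun x => ?_
        rw [hsplit, mul_left_comm]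
        exact mul_le_mul_left (ENNReal.rpow_le_rpow (setLIntegral_le_lintegral _ _)
          (by linarith)) _
    _ = (∫⁻ y, φ y ∂ν) ^ (p - 1) * ∫⁻ x, ω x * ∫⁻ y in A x, φ y ∂ν ∂μ :=
        lintegral_const_mul'' _ (hω.mul (aemeasurable_setLIntegral_of_measurableSet hA hφ))
    _ ≤ (∫⁻ y, φ y ∂ν) ^ (p - 1) * (C * ∫⁻ y, φ y ∂ν) := by
        gcongr
        exact lintegral_mul_setLIntegral_le hA hω hφ hC
    _ = C * (∫⁻ y, φ y ∂ν) ^ p := by rw [hsplit, mul_left_comm]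

end SchurTest

section HilbertCarleson

open Module (finrank)

variable {E : Type*} [NormedAddCommGroup E] [InnerProductSpace ℂ E] {w z : E} {q s : ℝ} {C : ℝ≥0∞}

theorem rpow_le_rpow_abs_mul_rpow {x y K : ℝ} (hx : 0 < x) (hy : 0 < y) (hK : 1 ≤ K)
    (hxy : x ≤ K * y) (hyx : y ≤ K * x) (t : ℝ) : x ^ t ≤ K ^ |t| * y ^ t := by
  have hK0 : 0 < K := one_pos.trans_le hK
  rcases le_or_gt 0 t with ht | ht
  · rw [abs_of_nonneg ht, ← Real.mul_rpow hK0.le hy.le]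
    exact Real.rpow_le_rpow hx.le hxy ht
  · rw [abs_of_neg ht, Real.rpow_neg hK0.le, ← Real.inv_rpow hK0.le,
      ← Real.mul_rpow (inv_nonneg.2 hK0.le) hy.le]
    exact Real.rpow_le_rpow_of_nonpos (by positivity) ((inv_mul_le_iff₀ hK0).2 hyx) ht.le

theorem one_sub_norm_sq_center_rpow_le (hz : z ∈ anisoBall w) (t : ℝ) :
    (1 - ‖w‖ ^ 2) ^ t ≤ 2 ^ |t| * (1 - ‖z‖ ^ 2) ^ t := by
  have hz0 := one_sub_norm_sq_pos_iff.2 (norm_lt_one_of_mem_anisoBall hz)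
  have hw0 := one_sub_norm_sq_pos_iff.2 (norm_center_lt_one_of_mem_anisoBall hz)
  exact rpow_le_rpow_abs_mul_rpow hw0 hz0 one_le_two
    (by linarith [le_one_sub_norm_sq_of_mem_anisoBall hz])
    (by linarith [one_sub_norm_sq_le_of_mem_anisoBall hz]) t

variable [MeasurableSpace E]

theorem setLIntegral_one_sub_norm_sq_rpow_neg_le {μ : Measure E}
    (hC : ∀ a : E, ‖a‖ < 1 →
      μ {w | a ∈ anisoBall w} ≤ C * ENNReal.ofReal ((1 - ‖a‖ ^ 2) ^ s)) (a : E) :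
    ∫⁻ w in {w | a ∈ anisoBall w}, ENNReal.ofReal ((1 - ‖w‖ ^ 2) ^ (-s)) ∂μ ≤
      ENNReal.ofReal (2 ^ |-s|) * C := by
  rcases lt_or_ge ‖a‖ 1 with ha | ha
  · have hδ := one_sub_norm_sq_pos_iff.2 ha
    set δ := 1 - ‖a‖ ^ 2
    calc _ ≤ ∫⁻ w in {w | a ∈ anisoBall w}, ENNReal.ofReal (2 ^ |-s| * δ ^ (-s)) ∂μ :=
          setLIntegral_mono measurable_const fun w hw =>
            ENNReal.ofReal_le_ofReal (one_sub_norm_sq_center_rpow_le hw _)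
      _ ≤ ENNReal.ofReal (2 ^ |-s| * δ ^ (-s)) * (C * ENNReal.ofReal (δ ^ s)) := by
          rw [setLIntegral_const]
          exact mul_le_mul_right (hC a ha) _
      _ = _ := by
          rw [mul_left_comm, ← ENNReal.ofReal_mul (by positivity), mul_assoc, ← Real.rpow_add hδ,
            neg_add_cancel, Real.rpow_zero, mul_one, mul_comm]
  · have hempty : {w | a ∈ anisoBall w} = ∅ := Set.eq_empty_of_forall_notMem fun w hw =>
      (norm_lt_one_of_mem_anisoBall hw).not_ge ha
    rw [hempty, Measure.restrict_empty, lintegral_zero_measure]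
    exact zero_le

variable [BorelSpace E]

theorem ofReal_center_mul_setLIntegral_anisoBall_le (ν : Measure E) (β : ℝ) (w : E)
    (f : E → ℝ≥0∞) :
    ENNReal.ofReal ((1 - ‖w‖ ^ 2) ^ β) * ∫⁻ z in anisoBall w, f z ∂ν ≤
      ENNReal.ofReal (2 ^ |β|) * ∫⁻ z in anisoBall w, f z ∂weightedMeas ν β := by
  have hmeas := (isOpen_anisoBall w).measurableSet
  rw [setLIntegral_weightedMeas ν β hmeas (anisoBall_subset_ball w),
    ← lintegral_const_mul' _ _ ENNReal.ofReal_ne_top,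
    ← lintegral_const_mul' _ _ ENNReal.ofReal_ne_top]
  refine setLIntegral_mono' hmeas fun z hz => ?_
  rw [← mul_assoc, ← ENNReal.ofReal_mul (by positivity)]
  exact mul_le_mul_left (ENNReal.ofReal_le_ofReal (one_sub_norm_sq_center_rpow_le hz β)) _

variable [FiniteDimensional ℂ E] (ν : Measure E) [ν.IsAddHaarMeasure] {F : Type*}
  [NormedAddCommGroup F] [NormedSpace ℂ F] [CompleteSpace F]

theorem exists_enorm_sq_le_setLIntegral_weightedMeas (β : ℝ) :
    ∃ C : ℝ≥0∞, C ≠ ∞ ∧ ∀ (f : E → F) (w : E), DifferentiableOn ℂ f (ball 0 1) → ‖w‖ < 1 →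
      ‖f w‖ₑ ^ 2 ≤ C * ENNReal.ofReal ((1 - ‖w‖ ^ 2) ^ (-(finrank ℂ E + 1 + β))) *
        ∫⁻ z in anisoBall w, ‖f z‖ₑ ^ 2 ∂weightedMeas ν β := by
  have hV : ν (ball 0 (1 / 8)) ≠ 0 := (measure_ball_pos ν 0 (by norm_num)).ne'
  refine ⟨(ν (ball 0 (1 / 8)))⁻¹ * ENNReal.ofReal (2 ^ |β|), by finiteness, fun f w hf hw => ?_⟩
  have hδ := one_sub_norm_sq_pos_iff.2 hw
  set δ := 1 - ‖w‖ ^ 2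
  have hδd : 0 < δ ^ (finrank ℂ E + 1) := pow_pos hδ _
  have hsplit : ENNReal.ofReal (δ ^ (-(finrank ℂ E + 1 + β))) * ENNReal.ofReal (δ ^ β) =
      (ENNReal.ofReal (δ ^ (finrank ℂ E + 1)))⁻¹ := by
    rw [← ENNReal.ofReal_mul (by positivity), ← Real.rpow_add hδ, ← ENNReal.ofReal_inv_of_pos hδd,
      neg_add, neg_add_cancel_right, ← Nat.cast_add_one, Real.rpow_neg hδ.le, Real.rpow_natCast]
  calc ‖f w‖ₑ ^ 2 ≤ (ν (anisoBall w))⁻¹ * ∫⁻ z in anisoBall w, ‖f z‖ₑ ^ 2 ∂ν :=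
        enorm_sq_le_lintegral_anisoBall hf hw
    _ ≤ (ENNReal.ofReal (δ ^ (finrank ℂ E + 1)) * ν (ball 0 (1 / 8)))⁻¹ *
        ∫⁻ z in anisoBall w, ‖f z‖ₑ ^ 2 ∂ν :=
        mul_le_mul_left (ENNReal.inv_le_inv.2 (le_measure_anisoBall hw)) _
    _ = (ν (ball 0 (1 / 8)))⁻¹ * ENNReal.ofReal (δ ^ (-(finrank ℂ E + 1 + β))) *
        (ENNReal.ofReal (δ ^ β) * ∫⁻ z in anisoBall w, ‖f z‖ₑ ^ 2 ∂ν) := by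
        rw [ENNReal.mul_inv (Or.inr measure_ball_lt_top.ne) (Or.inr hV), ← hsplit]
        ring
    _ ≤ (ν (ball 0 (1 / 8)))⁻¹ * ENNReal.ofReal (δ ^ (-(finrank ℂ E + 1 + β))) *
        (ENNReal.ofReal (2 ^ |β|) * ∫⁻ z in anisoBall w, ‖f z‖ₑ ^ 2 ∂weightedMeas ν β) :=
        mul_le_mul_right (ofReal_center_mul_setLIntegral_anisoBall_le ν β w _) _
    _ = _ := by ring

theorem exists_eLpNorm_le_eLpNorm_two_weightedMeas {μ : Measure E} [SFinite μ]
    (hμ : ∀ᵐ w ∂μ, ‖w‖ < 1) (hq : 2 ≤ q) {β : ℝ} (hCtop : C ≠ ∞)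
    (hC : ∀ a : E, ‖a‖ < 1 → μ {w | a ∈ anisoBall w} ≤
      C * ENNReal.ofReal ((1 - ‖a‖ ^ 2) ^ ((finrank ℂ E + 1 + β) * (q / 2)))) :
    ∃ D : ℝ≥0∞, D ≠ ∞ ∧ ∀ f : E → F, DifferentiableOn ℂ f (ball 0 1) →
      eLpNorm f (ENNReal.ofReal q) μ ≤ D * eLpNorm f 2 (weightedMeas ν β) := by
  obtain ⟨A, hA, hsub⟩ := exists_enorm_sq_le_setLIntegral_weightedMeas (F := F) ν β
  set s := (finrank ℂ E + 1 + β) * (q / 2)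
  set ω : E → ℝ≥0∞ := fun w => ENNReal.ofReal ((1 - ‖w‖ ^ 2) ^ (-s))
  have hq0 : 0 < q := by linarith
  have hq2 : 0 ≤ q / 2 := by linarith
  refine ⟨(A ^ (q / 2) * (ENNReal.ofReal (2 ^ |-s|) * C)) ^ (1 / q), by finiteness,
    fun f hf => ?_⟩
  have hfm : AEMeasurable (fun z => ‖f z‖ₑ ^ 2) (weightedMeas ν β) :=
    ((hf.continuousOn.aestronglyMeasurable measurableSet_ball).mono_ac
      (withDensity_absolutelyContinuous _ _)).enorm.pow_const 2
  have hpoint : ∀ w, ‖w‖ < 1 → ‖f w‖ₑ ^ q ≤ A ^ (q / 2) *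
      (ω w * (∫⁻ z in anisoBall w, ‖f z‖ₑ ^ 2 ∂weightedMeas ν β) ^ (q / 2)) := fun w hw => by
    have hδ := one_sub_norm_sq_pos_iff.2 hw
    have hω : ENNReal.ofReal ((1 - ‖w‖ ^ 2) ^ (-(finrank ℂ E + 1 + β))) ^ (q / 2) = ω w := by
      rw [ENNReal.ofReal_rpow_of_nonneg (by positivity) hq2, ← Real.rpow_mul hδ.le, neg_mul]
    rw [← hω, ← ENNReal.mul_rpow_of_nonneg _ _ hq2, ← ENNReal.mul_rpow_of_nonneg _ _ hq2,
      ← mul_assoc]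
    refine le_of_eq_of_le ?_ (ENNReal.rpow_le_rpow (hsub f w hf hw) hq2)
    rw [← ENNReal.rpow_natCast, ← ENNReal.rpow_mul, Nat.cast_ofNat, mul_div_cancel₀ _ two_ne_zero]
  have h_int : ∫⁻ w, ‖f w‖ₑ ^ q ∂μ ≤ A ^ (q / 2) * (ENNReal.ofReal (2 ^ |-s|) * C *
      (∫⁻ z, ‖f z‖ₑ ^ 2 ∂weightedMeas ν β) ^ (q / 2)) :=
    calc _ ≤ _ := lintegral_mono_ae (hμ.mono hpoint)
      _ ≤ _ := by
        rw [lintegral_const_mul' _ _ (by finiteness)]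
        exact mul_le_mul_right (lintegral_mul_setLIntegral_rpow_le
          measurableSet_setOf_mem_anisoBall (by fun_prop) hfm
          (setLIntegral_one_sub_norm_sq_rpow_neg_le hC) (by linarith)) _
  rw [← eLpNorm_two_sq, ← ENNReal.rpow_natCast, ← ENNReal.rpow_mul, Nat.cast_ofNat,
    mul_div_cancel₀ _ two_ne_zero, ← mul_assoc] at h_int
  rw [eLpNorm_eq_lintegral_rpow_enorm_toReal (by simpa using hq0) ENNReal.ofReal_ne_top,
    ENNReal.toReal_ofReal hq0.le]
  refine (ENNReal.rpow_le_rpow h_int (by positivity)).trans_eq ?_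
  rw [ENNReal.mul_rpow_of_nonneg _ _ (by positivity), ← ENNReal.rpow_mul,
    mul_one_div_cancel hq0.ne', ENNReal.rpow_one]

end HilbertCarleson

section CarlesonTestFunctions

open scoped InnerProductSpace
open Module (finrank)

variable {E : Type*} [NormedAddCommGroup E] [InnerProductSpace ℂ E] {a w : E}

/-- The holomorphic test functions `w ↦ (1 - ⟪a, w⟫)⁻ᴹ`, concentrated near the point `a` of the
unit ball; note that the inner product is linear in its second argument. -/
def testFun (M : ℕ) (a w : E) : ℂ := ((1 - ⟪a, w⟫_ℂ) ^ M)⁻¹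

theorem enorm_testFun (M : ℕ) (a w : E) :
    ‖testFun M a w‖ₑ = ENNReal.ofReal (‖1 - ⟪a, w⟫_ℂ‖ ^ (-(M : ℝ))) := by
  rw [← ofReal_norm, testFun, norm_inv, norm_pow, Real.rpow_neg (norm_nonneg _),
    Real.rpow_natCast]

theorem norm_one_sub_inner_pos (ha : ‖a‖ < 1) (hw : ‖w‖ ≤ 1) : 0 < ‖1 - ⟪a, w⟫_ℂ‖ :=
  (sub_pos.2 ha).trans_le (one_sub_norm_le_norm_one_sub_inner hw)

theorem differentiableOn_testFun (M : ℕ) (ha : ‖a‖ < 1) :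
    DifferentiableOn ℂ (testFun M a) (ball 0 1) := by
  have hpow : Differentiable ℂ fun w : E => (1 - ⟪a, w⟫_ℂ) ^ M :=
    ((differentiable_const 1).sub (innerSL ℂ a).differentiable).pow M
  exact hpow.differentiableOn.inv fun w hw =>
    pow_ne_zero _ (norm_pos_iff.1 (norm_one_sub_inner_pos ha (mem_ball_zero_iff.1 hw).le))

theorem le_enorm_testFun_of_mem_anisoBall (M : ℕ) (haw : a ∈ anisoBall w) :
    ENNReal.ofReal ((2 * (1 - ‖a‖ ^ 2)) ^ (-(M : ℝ))) ≤ ‖testFun M a w‖ₑ := by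
  have hpos := norm_one_sub_inner_pos (norm_lt_one_of_mem_anisoBall haw)
    (norm_center_lt_one_of_mem_anisoBall haw).le
  have hle : ‖1 - ⟪a, w⟫_ℂ‖ ≤ 2 * (1 - ‖a‖ ^ 2) := by
    rw [← inner_conj_symm, ← map_one (starRingEnd ℂ), ← map_sub, RCLike.norm_conj]
    linarith [norm_one_sub_inner_le_of_mem_anisoBall haw, le_one_sub_norm_sq_of_mem_anisoBall haw,
      one_sub_norm_sq_pos_iff.2 (norm_lt_one_of_mem_anisoBall haw)]
  rw [enorm_testFun]
  exact ENNReal.ofReal_le_ofReal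
    (Real.rpow_le_rpow_of_nonpos hpos hle (neg_nonpos.2 M.cast_nonneg))

variable [MeasurableSpace E] [BorelSpace E]

theorem measurable_testFun (M : ℕ) (a : E) : Measurable (testFun M a) :=
  (by fun_prop : Continuous fun w : E => (1 - ⟪a, w⟫_ℂ) ^ M).measurable.inv

theorem measure_setOf_mem_anisoBall_le {μ : Measure E} {q : ℝ} (hq : 0 < q) (M : ℕ)
    (ha : ‖a‖ < 1) :
    μ {w | a ∈ anisoBall w} ≤ (ENNReal.ofReal ((2 * (1 - ‖a‖ ^ 2)) ^ (M : ℝ)) *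
      eLpNorm (testFun M a) (ENNReal.ofReal q) μ) ^ q := by
  have hδ := one_sub_norm_sq_pos_iff.2 ha
  set ε := ENNReal.ofReal ((2 * (1 - ‖a‖ ^ 2)) ^ (-(M : ℝ)))
  have hmarkov := mul_meas_ge_le_pow_eLpNorm' μ (p := ENNReal.ofReal q) (by simpa using hq)
    ENNReal.ofReal_ne_top (measurable_testFun M a).aestronglyMeasurable ε
  rw [ENNReal.toReal_ofReal hq.le] at hmarkov
  have hone : ENNReal.ofReal ((2 * (1 - ‖a‖ ^ 2)) ^ (M : ℝ)) * ε = 1 := by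
    rw [← ENNReal.ofReal_mul (by positivity), ← Real.rpow_add (by positivity), add_neg_cancel,
      Real.rpow_zero, ENNReal.ofReal_one]
  rw [ENNReal.mul_rpow_of_nonneg _ _ hq.le]
  calc μ {w | a ∈ anisoBall w}
      ≤ μ {w | ε ≤ ‖testFun M a w‖ₑ} :=
        measure_mono fun w hw => le_enorm_testFun_of_mem_anisoBall M hw
    _ = ENNReal.ofReal ((2 * (1 - ‖a‖ ^ 2)) ^ (M : ℝ)) ^ q *
          (ε ^ q * μ {w | ε ≤ ‖testFun M a w‖ₑ}) := by
        rw [← mul_assoc, ← ENNReal.mul_rpow_of_nonneg _ _ hq.le, hone, ENNReal.one_rpow, one_mul]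
    _ ≤ _ := mul_le_mul_right hmarkov _

variable [FiniteDimensional ℂ E] [Nontrivial E] (ν : Measure E) [ν.IsAddHaarMeasure] {α : ℝ}

theorem isFiniteMeasure_weightedMeas (hα : -1 < α) : IsFiniteMeasure (weightedMeas ν α) := by
  obtain ⟨C, hC, h⟩ := exists_lintegral_norm_one_sub_inner_rpow_neg_le ν hα (lt_add_one _)
  have h0 := h 0 (by simp)
  simp only [inner_zero_left, sub_zero, norm_one, Real.one_rpow, ENNReal.ofReal_one,
    lintegral_one] at h0
  exact ⟨h0.trans_lt (by finiteness)⟩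

theorem exists_eLpNorm_one_testFun_le (hα : -1 < α) {M : ℕ} (hM : finrank ℂ E + 1 + α < M) :
    ∃ C : ℝ≥0∞, C ≠ ∞ ∧ ∀ a : E, ‖a‖ < 1 → eLpNorm (testFun M a) 1 (weightedMeas ν α) ≤
      C * ENNReal.ofReal ((1 - ‖a‖ ^ 2) ^ (finrank ℂ E + 1 + α - M)) := by
  simp only [eLpNorm_one_eq_lintegral_enorm, enorm_testFun]
  exact exists_lintegral_norm_one_sub_inner_rpow_neg_le ν hα hM

variable {μ : Measure E} {K : ℝ≥0∞} {q : ℝ}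

theorem exists_measure_setOf_mem_anisoBall_le (hα : -1 < α) (hq : 0 < q) (hK : K ≠ ∞)
    (hbdd : ∀ g : E → ℂ, DifferentiableOn ℂ g (ball 0 1) → MemLp g 1 (weightedMeas ν α) →
      eLpNorm g (ENNReal.ofReal q) μ ≤ K * eLpNorm g 1 (weightedMeas ν α)) :
    ∃ C : ℝ≥0∞, C ≠ ∞ ∧ ∀ a : E, ‖a‖ < 1 → μ {w | a ∈ anisoBall w} ≤
      C * ENNReal.ofReal ((1 - ‖a‖ ^ 2) ^ ((finrank ℂ E + 1 + α) * q)) := by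
  obtain ⟨M, hM⟩ := exists_nat_gt ((finrank ℂ E : ℝ) + 1 + α)
  obtain ⟨C, hC, h⟩ := exists_eLpNorm_one_testFun_le ν hα hM
  set κ : ℝ := finrank ℂ E + 1 + α
  refine ⟨(ENNReal.ofReal (2 ^ (M : ℝ)) * (K * C)) ^ q, by finiteness, fun a ha => ?_⟩
  have hδ := one_sub_norm_sq_pos_iff.2 ha
  set δ := 1 - ‖a‖ ^ 2
  have hnorm : eLpNorm (testFun M a) (ENNReal.ofReal q) μ ≤
      K * C * ENNReal.ofReal (δ ^ (κ - M)) := by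
    refine (hbdd _ (differentiableOn_testFun M ha)
      ⟨(measurable_testFun M a).aestronglyMeasurable, (h a ha).trans_lt (by finiteness)⟩).trans ?_
    rw [mul_assoc]
    exact mul_le_mul_right (h a ha) _
  have hexp : ENNReal.ofReal ((2 * δ) ^ (M : ℝ)) * ENNReal.ofReal (δ ^ (κ - M)) =
      ENNReal.ofReal (2 ^ (M : ℝ)) * ENNReal.ofReal (δ ^ κ) := by
    rw [← ENNReal.ofReal_mul (by positivity), ← ENNReal.ofReal_mul (by positivity),
      Real.mul_rpow zero_le_two hδ.le, mul_assoc, ← Real.rpow_add hδ, add_sub_cancel]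
  calc μ {w | a ∈ anisoBall w}
      ≤ (ENNReal.ofReal ((2 * δ) ^ (M : ℝ)) * (K * C * ENNReal.ofReal (δ ^ (κ - M)))) ^ q :=
        (measure_setOf_mem_anisoBall_le hq M ha).trans
          (ENNReal.rpow_le_rpow (mul_le_mul_right hnorm _) hq.le)
    _ = (ENNReal.ofReal (2 ^ (M : ℝ)) * (K * C) * ENNReal.ofReal (δ ^ κ)) ^ q := by
        rw [mul_left_comm, hexp]
        ring_nf
    _ = _ := by
        rw [ENNReal.mul_rpow_of_nonneg _ _ hq.le,
          ENNReal.ofReal_rpow_of_nonneg (Real.rpow_nonneg hδ.le _) hq.le, ← Real.rpow_mul hδ.le]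

theorem isFiniteMeasure_of_eLpNorm_le_eLpNorm_one (hα : -1 < α) (hq : 0 < q) (hK : K ≠ ∞)
    (hbdd : ∀ g : E → ℂ, DifferentiableOn ℂ g (ball 0 1) → MemLp g 1 (weightedMeas ν α) →
      eLpNorm g (ENNReal.ofReal q) μ ≤ K * eLpNorm g 1 (weightedMeas ν α)) :
    IsFiniteMeasure μ := by
  have := isFiniteMeasure_weightedMeas ν hα
  have hone : MemLp (fun _ : E => (1 : ℂ)) 1 (weightedMeas ν α) := memLp_const 1
  have hmem : MemLp (fun _ : E => (1 : ℂ)) (ENNReal.ofReal q) μ :=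
    ⟨aestronglyMeasurable_const, (hbdd _ (differentiableOn_const 1) hone).trans_lt
      (ENNReal.mul_lt_top hK.lt_top hone.2)⟩
  rw [memLp_const_iff (by simpa using hq) ENNReal.ofReal_ne_top] at hmem
  exact ⟨hmem.resolve_left one_ne_zero⟩

theorem exists_eLpNorm_le_eLpNorm_two_of_le_eLpNorm_one {F : Type*} [NormedAddCommGroup F]
    [NormedSpace ℂ F] [CompleteSpace F] (hμ : ∀ᵐ w ∂μ, ‖w‖ < 1) (hα : -1 < α) (hq : 2 ≤ q)
    (hK : K ≠ ∞)
    (hbdd : ∀ g : E → ℂ, DifferentiableOn ℂ g (ball 0 1) → MemLp g 1 (weightedMeas ν α) →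
      eLpNorm g (ENNReal.ofReal q) μ ≤ K * eLpNorm g 1 (weightedMeas ν α)) :
    ∃ D : ℝ≥0∞, D ≠ ∞ ∧ ∀ f : E → F, DifferentiableOn ℂ f (ball 0 1) →
      eLpNorm f (ENNReal.ofReal q) μ ≤
        D * eLpNorm f 2 (weightedMeas ν (finrank ℂ E + 1 + 2 * α)) := by
  have hq0 : 0 < q := by linarith
  have := isFiniteMeasure_of_eLpNorm_le_eLpNorm_one ν hα hq0 hK hbdd
  obtain ⟨C, hC, h⟩ := exists_measure_setOf_mem_anisoBall_le ν hα hq0 hK hbdd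
  refine exists_eLpNorm_le_eLpNorm_two_weightedMeas ν hμ hq hC fun a ha => ?_
  convert h a ha using 4
  ring

end CarlesonTestFunctions

section MeanKernel

open Module (finrank)

variable {E : Type*} [NormedAddCommGroup E] [InnerProductSpace ℂ E] [MeasurableSpace E]
  {w z : E} {f : E → ℂ}

/-- The kernel averaging over the anisotropic ball `anisoBall w`. As a kernel against
`weightedMeas ν α` it reproduces holomorphic functions at `w`, hence the compensating factor
`(1 - ‖z‖²)⁻ᵅ`. -/
def meanKernel (ν : Measure E) (α : ℝ) (z w : E) : ℂ :=
  (anisoBall w).indicator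
    (fun z => (((ν.real (anisoBall w))⁻¹ * (1 - ‖z‖ ^ 2) ^ (-α) : ℝ) : ℂ)) z

variable [BorelSpace E] [FiniteDimensional ℂ E]

theorem lintegral_enorm_meanKernel_sq (ν : Measure E) (α β : ℝ) (z : E) :
    ∫⁻ w, ‖meanKernel ν α z w‖ₑ ^ 2 ∂weightedMeas ν β =
      ∫⁻ w in {w | z ∈ anisoBall w},
        ENNReal.ofReal ((1 - ‖w‖ ^ 2) ^ β) * ‖meanKernel ν α z w‖ₑ ^ 2 ∂ν := by
  have hmeas : MeasurableSet {w : E | z ∈ anisoBall w} :=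
    measurable_prodMk_left (x := z) measurableSet_setOf_mem_anisoBall
  have hball : {w : E | z ∈ anisoBall w} ⊆ ball 0 1 := fun w hw =>
    mem_ball_zero_iff.2 (norm_center_lt_one_of_mem_anisoBall hw)
  rw [← setLIntegral_weightedMeas ν β hmeas hball, ← lintegral_indicator hmeas]
  refine lintegral_congr fun w => ?_
  by_cases hzw : z ∈ anisoBall w
  · rw [Set.indicator_of_mem (show w ∈ {w | z ∈ anisoBall w} from hzw)]
  · rw [Set.indicator_of_notMem (show w ∉ {w | z ∈ anisoBall w} from hzw), meanKernel,
      Set.indicator_of_notMem hzw, enorm_zero, zero_pow two_ne_zero]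

variable (ν : Measure E) [ν.IsAddHaarMeasure] (α : ℝ)

theorem measurable_uncurry_meanKernel : Measurable (Function.uncurry (meanKernel ν α)) := by
  have hvol : Measurable fun w : E => (ν.real (anisoBall w))⁻¹ :=
    (measurable_measure_prodMk_right (μ := ν)
      measurableSet_setOf_mem_anisoBall).ennreal_toReal.inv
  have hker : Measurable fun p : E × E =>
      (((ν.real (anisoBall p.2))⁻¹ * (1 - ‖p.1‖ ^ 2) ^ (-α) : ℝ) : ℂ) :=
    measurable_ofReal.comp ((hvol.comp measurable_snd).mul (by fun_prop))
  exact hker.indicator measurableSet_setOf_mem_anisoBall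

theorem integral_mul_meanKernel (hf : DifferentiableOn ℂ f (ball 0 1)) (hw : ‖w‖ < 1) :
    ∫ z, f z * meanKernel ν α z w ∂weightedMeas ν α = f w := by
  have hV : (ν.real (anisoBall w) : ℂ) ≠ 0 := ofReal_ne_zero.2
    (ENNReal.toReal_ne_zero.2 ⟨measure_anisoBall_ne_zero hw, measure_anisoBall_ne_top w⟩)
  have hweight (z : E) (hz : z ∈ ball 0 1) :
      (ENNReal.ofReal ((1 - ‖z‖ ^ 2) ^ α)).toReal • (f z * meanKernel ν α z w) =
        (anisoBall w).indicator (fun z => (ν.real (anisoBall w) : ℂ)⁻¹ * f z) z := by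
    have hδ := one_sub_norm_sq_pos_iff.2 (mem_ball_zero_iff.1 hz)
    have hcancel : (((1 - ‖z‖ ^ 2) ^ α : ℝ) : ℂ) * (((1 - ‖z‖ ^ 2) ^ (-α) : ℝ) : ℂ) = 1 := by
      rw [← ofReal_mul, ← Real.rpow_add hδ, add_neg_cancel, Real.rpow_zero, ofReal_one]
    by_cases hzw : z ∈ anisoBall w
    · rw [meanKernel, Set.indicator_of_mem hzw, Set.indicator_of_mem hzw,
        ENNReal.toReal_ofReal (by positivity), real_smul, ofReal_mul, ofReal_inv]
      linear_combination (ν.real (anisoBall w) : ℂ)⁻¹ * f z * hcancel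
    · rw [meanKernel, Set.indicator_of_notMem hzw, Set.indicator_of_notMem hzw, mul_zero, smul_zero]
  rw [weightedMeas, integral_withDensity_eq_integral_toReal_smul (by fun_prop)
    (ae_of_all _ fun _ => ENNReal.ofReal_lt_top), setIntegral_congr_fun measurableSet_ball hweight,
    setIntegral_indicator (isOpen_anisoBall w).measurableSet,
    Set.inter_eq_self_of_subset_right (anisoBall_subset_ball w), integral_const_mul,
    setIntegral_anisoBall hf, real_smul, inv_mul_cancel_left₀ hV]

theorem norm_meanKernel_le (hz : z ∈ anisoBall w) :
    ‖meanKernel ν α z w‖ ≤ 2 ^ (finrank ℂ E + 1) * (ν.real (ball 0 (1 / 8)))⁻¹ *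
      (1 - ‖z‖ ^ 2) ^ (-(finrank ℂ E + 1 + α)) := by
  have hw := norm_center_lt_one_of_mem_anisoBall hz
  have hδz := one_sub_norm_sq_pos_iff.2 (norm_lt_one_of_mem_anisoBall hz)
  have hδw := one_sub_norm_sq_pos_iff.2 hw
  have hV : 0 < ν.real (ball 0 (1 / 8)) :=
    ENNReal.toReal_pos (measure_ball_pos ν 0 (by norm_num)).ne' measure_ball_lt_top.ne
  have hvol : ((1 - ‖z‖ ^ 2) / 2) ^ (finrank ℂ E + 1) * ν.real (ball 0 (1 / 8)) ≤
      ν.real (anisoBall w) := by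
    have h := ENNReal.toReal_mono (measure_anisoBall_ne_top w) (le_measure_anisoBall (ν := ν) hw)
    rw [ENNReal.toReal_mul, ENNReal.toReal_ofReal (by positivity)] at h
    refine le_trans ?_ h
    rw [measureReal_def]
    gcongr
    linarith [one_sub_norm_sq_le_of_mem_anisoBall hz]
  rw [meanKernel, Set.indicator_of_mem hz, Complex.norm_of_nonneg (by positivity)]
  calc _ ≤ (((1 - ‖z‖ ^ 2) / 2) ^ (finrank ℂ E + 1) * ν.real (ball 0 (1 / 8)))⁻¹ *
        (1 - ‖z‖ ^ 2) ^ (-α) := by gcongr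
    _ = _ := by
        rw [neg_add, Real.rpow_add hδz, Real.rpow_neg hδz.le (_ + 1), ← Nat.cast_add_one,
          Real.rpow_natCast, mul_inv, div_pow, inv_div]
        ring

theorem measure_setOf_mem_anisoBall_le_measure_ball (z : E) :
    ν {w | z ∈ anisoBall w} ≤
      ENNReal.ofReal ((1 - ‖z‖ ^ 2) ^ (finrank ℂ E + 1)) * ν (ball 0 2) :=
  calc _ ≤ ν ((fun w => w + -z) ⁻¹' anisoBox z (1 - ‖z‖ ^ 2)) :=
        measure_mono fun w hw => by
          simpa only [Set.mem_preimage, ← sub_eq_add_neg] using sub_mem_anisoBox_of_mem_anisoBall hw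
    _ ≤ _ := by
        rw [measure_preimage_add_right]
        exact measure_anisoBox_le ν le_rfl

theorem exists_ofReal_mul_enorm_meanKernel_sq_le : ∃ D : ℝ, 0 < D ∧ ∀ w z : E, z ∈ anisoBall w →
    ENNReal.ofReal ((1 - ‖w‖ ^ 2) ^ (finrank ℂ E + 1 + 2 * α)) * ‖meanKernel ν α z w‖ₑ ^ 2 ≤
      ENNReal.ofReal (D * ((1 - ‖z‖ ^ 2) ^ (finrank ℂ E + 1))⁻¹) := by
  set d := finrank ℂ E
  set β : ℝ := d + 1 + 2 * α with hβ
  have hV : 0 < ν.real (ball 0 (1 / 8)) :=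
    ENNReal.toReal_pos (measure_ball_pos ν 0 (by norm_num)).ne' measure_ball_lt_top.ne
  set D := 2 ^ (d + 1) * (ν.real (ball 0 (1 / 8)))⁻¹
  refine ⟨2 ^ |β| * D ^ 2, by positivity, fun w z hz => ?_⟩
  have hδ := one_sub_norm_sq_pos_iff.2 (norm_lt_one_of_mem_anisoBall hz)
  have hexp {δ : ℝ} (hδ : 0 < δ) : δ ^ β * (δ ^ (-(d + 1 + α))) ^ 2 = (δ ^ (d + 1))⁻¹ := by
    rw [← Real.rpow_natCast, ← Real.rpow_natCast, ← Real.rpow_mul hδ.le, ← Real.rpow_add hδ,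
      ← Real.rpow_neg hδ.le, hβ]
    congr 1
    push_cast
    ring
  rw [← hexp hδ, ← ofReal_norm, ← ENNReal.ofReal_pow (norm_nonneg _),
    ← ENNReal.ofReal_mul' (by positivity)]
  refine ENNReal.ofReal_le_ofReal ?_
  calc _ ≤ 2 ^ |β| * (1 - ‖z‖ ^ 2) ^ β * (D * (1 - ‖z‖ ^ 2) ^ (-(d + 1 + α))) ^ 2 := by
        gcongr
        · exact one_sub_norm_sq_center_rpow_le hz β
        · exact norm_meanKernel_le ν α hz
    _ = _ := by ring

theorem exists_eLpNorm_two_meanKernel_le : ∃ B : ℝ, 0 < B ∧ ∀ z : E,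
    eLpNorm (meanKernel ν α z) 2 (weightedMeas ν (finrank ℂ E + 1 + 2 * α)) ≤
      ENNReal.ofReal B := by
  obtain ⟨D, hD, hker⟩ := exists_ofReal_mul_enorm_meanKernel_sq_le ν α
  have hV : 0 < ν.real (ball 0 2) :=
    ENNReal.toReal_pos (measure_ball_pos ν 0 two_pos).ne' measure_ball_lt_top.ne
  refine ⟨√(D * ν.real (ball 0 2)), by positivity, fun z => ?_⟩
  rw [← ENNReal.pow_le_pow_left_iff two_ne_zero, eLpNorm_two_sq,
    ← ENNReal.ofReal_pow (by positivity), Real.sq_sqrt (by positivity),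
    lintegral_enorm_meanKernel_sq]
  rcases le_or_gt 1 ‖z‖ with hz | hz
  · have hempty : {w | z ∈ anisoBall w} = ∅ := Set.eq_empty_of_forall_notMem fun w hw =>
      (norm_lt_one_of_mem_anisoBall hw).not_ge hz
    rw [hempty, Measure.restrict_empty, lintegral_zero_measure]
    exact zero_le
  have hδ := pow_pos (one_sub_norm_sq_pos_iff.2 hz) (finrank ℂ E + 1)
  calc _ ≤ ENNReal.ofReal (D * ((1 - ‖z‖ ^ 2) ^ (finrank ℂ E + 1))⁻¹) *
        ν {w | z ∈ anisoBall w} := by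
        rw [← setLIntegral_const]
        exact setLIntegral_mono measurable_const fun w => hker w z
    _ ≤ ENNReal.ofReal (D * ((1 - ‖z‖ ^ 2) ^ (finrank ℂ E + 1))⁻¹) *
        (ENNReal.ofReal ((1 - ‖z‖ ^ 2) ^ (finrank ℂ E + 1)) * ν (ball 0 2)) :=
        mul_le_mul_right (measure_setOf_mem_anisoBall_le_measure_ball ν z) _
    _ = ENNReal.ofReal (D * ν.real (ball 0 2)) := by
        rw [← mul_assoc, ← ENNReal.ofReal_mul (by positivity), inv_mul_cancel_right₀ hδ.ne',
          ENNReal.ofReal_mul hD.le, ofReal_measureReal measure_ball_lt_top.ne]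

end MeanKernel

section SummingInclusion

open Module (finrank)

variable {E : Type*} [NormedAddCommGroup E] [InnerProductSpace ℂ E] [FiniteDimensional ℂ E]
  [MeasurableSpace E] [BorelSpace E] (ν : Measure E) [ν.IsAddHaarMeasure] {α : ℝ}

theorem eLpNorm_integral_mul_meanKernel (p : ℝ≥0∞) (β : ℝ) {g : E → ℂ}
    (hg : DifferentiableOn ℂ g (ball 0 1)) :
    eLpNorm (fun w => ∫ z, g z * meanKernel ν α z w ∂weightedMeas ν α) p (weightedMeas ν β) =
      eLpNorm g p (weightedMeas ν β) :=
  eLpNorm_congr_ae <| (ae_norm_lt_one_weightedMeas ν β).mono fun _ hw =>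
    integral_mul_meanKernel ν α hg hw

theorem eLpNorm_two_ne_top_of_integrable {g : E → ℂ} (hg : DifferentiableOn ℂ g (ball 0 1))
    (hgi : Integrable g (weightedMeas ν α)) :
    eLpNorm g 2 (weightedMeas ν (finrank ℂ E + 1 + 2 * α)) ≠ ∞ := by
  obtain ⟨B, -, hB⟩ := exists_eLpNorm_two_meanKernel_le ν α
  rw [← eLpNorm_integral_mul_meanKernel ν 2 _ hg]
  exact (memLp_two_integral_mul_kernel hgi (measurable_uncurry_meanKernel ν α) hB).2.ne

theorem exists_sum_eLpNorm_two_le_of_scalarBound (α : ℝ) : ∃ B : ℝ, 0 ≤ B ∧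
    ∀ {κ : Type*} [Fintype κ] {g : κ → E → ℂ} {S : ℝ},
      (∀ k, DifferentiableOn ℂ (g k) (ball 0 1)) → (∀ k, Integrable (g k) (weightedMeas ν α)) →
      ScalarBound (weightedMeas ν α) g S →
        ∑ k, (eLpNorm (g k) 2 (weightedMeas ν (finrank ℂ E + 1 + 2 * α))).toReal ≤ B * S := by
  obtain ⟨B, hB₀, hB⟩ := exists_eLpNorm_two_meanKernel_le ν α
  refine ⟨B * 98, by positivity, fun {κ} _ {g S} hg hgi hS => ?_⟩
  simpa only [eLpNorm_integral_mul_meanKernel ν 2 _ (hg _), mul_assoc] using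
    hS.sum_eLpNorm_two_integral_mul_kernel_le hgi (measurable_uncurry_meanKernel ν α) hB₀ hB

end SummingInclusion

section Summing

variable {X Y ι : Type*} [NormedAddCommGroup X] [NormedSpace ℂ X] [NormedAddCommGroup Y]
  [Fintype ι] {x : ι → X} {φ : X →L[ℂ] ℂ} {p r C : ℝ}

/-- The weak `ℓʳ` norm of a finite family, the right-hand side of the `r`-summing inequality. -/
def weakNorm (r : ℝ) (x : ι → X) : ℝ :=
  ⨆ φ : {φ : X →L[ℂ] ℂ // ‖φ‖ ≤ 1}, (∑ k, ‖φ.1 (x k)‖ ^ r) ^ (1 / r)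

theorem weakNorm_nonneg (r : ℝ) (x : ι → X) : 0 ≤ weakNorm r x :=
  Real.iSup_nonneg fun _ => by positivity

theorem le_weakNorm (hr : 0 ≤ r) (x : ι → X) (hφ : ‖φ‖ ≤ 1) :
    (∑ k, ‖φ (x k)‖ ^ r) ^ (1 / r) ≤ weakNorm r x := by
  have hbdd : BddAbove (Set.range fun φ : {φ : X →L[ℂ] ℂ // ‖φ‖ ≤ 1} =>
      (∑ k, ‖φ.1 (x k)‖ ^ r) ^ (1 / r)) := by
    refine ⟨(∑ k, ‖x k‖ ^ r) ^ (1 / r), ?_⟩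
    rintro _ ⟨φ, rfl⟩
    dsimp only
    gcongr with k
    exact (φ.1.le_of_opNorm_le φ.2 (x k)).trans_eq (one_mul _)
  exact le_ciSup hbdd ⟨φ, hφ⟩

theorem sum_norm_apply_le_weakNorm_one (x : ι → X) (hφ : ‖φ‖ ≤ 1) :
    ∑ k, ‖φ (x k)‖ ≤ weakNorm 1 x := by
  simpa only [Real.rpow_one, div_one] using le_weakNorm zero_le_one x hφ

theorem weakNorm_const_le [Unique ι] (hr : r ≠ 0) (x : X) : weakNorm r (fun _ : ι => x) ≤ ‖x‖ := by
  have : Nonempty {φ : X →L[ℂ] ℂ // ‖φ‖ ≤ 1} := ⟨⟨0, by simp⟩⟩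
  refine ciSup_le fun φ => ?_
  rw [Fintype.sum_unique, one_div, Real.rpow_rpow_inv (norm_nonneg _) hr]
  exact (φ.1.le_of_opNorm_le φ.2 x).trans_eq (one_mul _)

theorem weakNorm_one_smul_le (hpr : p.HolderConjugate r) {c : ι → ℝ} (hc : ∀ k, 0 ≤ c k)
    (x : ι → X) :
    weakNorm 1 (fun k => (c k : ℂ) • x k) ≤ (∑ k, c k ^ p) ^ (1 / p) * weakNorm r x := by
  have hc' : 0 ≤ (∑ k, c k ^ p) ^ (1 / p) :=
    Real.rpow_nonneg (Finset.sum_nonneg fun k _ => Real.rpow_nonneg (hc k) p) _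
  refine Real.iSup_le (fun φ => ?_) (mul_nonneg hc' (weakNorm_nonneg r x))
  simp only [Real.rpow_one, div_one]
  calc ∑ k, ‖φ.1 ((c k : ℂ) • x k)‖ = ∑ k, c k * ‖φ.1 (x k)‖ :=
        Finset.sum_congr rfl fun k _ => by
          rw [map_smul, norm_smul, Complex.norm_of_nonneg (hc k)]
    _ ≤ (∑ k, c k ^ p) ^ (1 / p) * (∑ k, ‖φ.1 (x k)‖ ^ r) ^ (1 / r) :=
        Real.inner_le_Lp_mul_Lq_of_nonneg _ hpr (fun k _ => hc k) fun k _ => norm_nonneg _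
    _ ≤ _ := by
        gcongr
        exact le_weakNorm hpr.symm.nonneg x φ.2

theorem rpow_one_div_le_of_le_rpow_one_div_mul {s t : ℝ} (hpr : p.HolderConjugate r)
    (hs : 0 ≤ s) (ht : 0 ≤ t) (h : s ≤ s ^ (1 / p) * t) : s ^ (1 / r) ≤ t := by
  rcases hs.eq_or_lt with rfl | hs
  · rwa [Real.zero_rpow (one_div_ne_zero hpr.symm.ne_zero)]
  · refine le_of_mul_le_mul_left ?_ (Real.rpow_pos_of_pos hs (1 / p))
    rw [← Real.rpow_add hs, one_div r, one_div p, hpr.inv_add_inv_eq_one, Real.rpow_one]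
    rwa [one_div] at h

namespace SummingBoundWith

theorem norm_le {T : X → Y} (h : SummingBoundWith r r T C) (hr : r ≠ 0) (hC : 0 ≤ C) (x : X) :
    ‖T x‖ ≤ C * ‖x‖ :=
  calc ‖T x‖ = (∑ _k : Fin 1, ‖T x‖ ^ r) ^ (1 / r) := by
        rw [Fintype.sum_unique, one_div, Real.rpow_rpow_inv (norm_nonneg _) hr]
    _ ≤ C * weakNorm r fun _ : Fin 1 => x := h 1 fun _ => x
    _ ≤ C * ‖x‖ := by
        gcongr
        exact weakNorm_const_le hr x

/-- Applying the `1`-summing inequality to the vectors `‖T x‖ ^ (r - 1) • x` turns its left-hand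
side into `∑ ‖T x‖ ^ r`, and Hölder's inequality controls its right-hand side. -/
theorem of_one [NormedSpace ℂ Y] {T : X →ₗ[ℂ] Y} (h : SummingBoundWith 1 1 T C) (hr : 1 ≤ r)
    (hC : 0 ≤ C) : SummingBoundWith r r T C := by
  rcases hr.eq_or_lt with rfl | hr
  · exact h
  intro m x
  have hpr := (Real.HolderConjugate.conjExponent hr).symm
  have hsum : ∑ k, ‖T (((‖T (x k)‖ ^ (r - 1) : ℝ) : ℂ) • x k)‖ = ∑ k, ‖T (x k)‖ ^ r :=
    Finset.sum_congr rfl fun k _ => by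
      rw [map_smul, norm_smul, Complex.norm_of_nonneg (by positivity),
        ← Real.rpow_add_one' (norm_nonneg _) (by linarith), sub_add_cancel]
  have hpow : ∑ k, (‖T (x k)‖ ^ (r - 1)) ^ r.conjExponent = ∑ k, ‖T (x k)‖ ^ r :=
    Finset.sum_congr rfl fun k _ => by
      rw [← Real.rpow_mul (norm_nonneg _), hpr.symm.sub_one_mul_conj]
  have h₁ := h m fun k => ((‖T (x k)‖ ^ (r - 1) : ℝ) : ℂ) • x k
  simp only [Real.rpow_one, div_one, hsum] at h₁
  refine rpow_one_div_le_of_le_rpow_one_div_mul hpr (by positivity)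
    (mul_nonneg hC (weakNorm_nonneg r x)) ?_
  calc _ ≤ C * weakNorm 1 fun k => ((‖T (x k)‖ ^ (r - 1) : ℝ) : ℂ) • x k := by
        simpa only [weakNorm, Real.rpow_one, div_one] using h₁
    _ ≤ C * ((∑ k, ‖T (x k)‖ ^ r) ^ (1 / r.conjExponent) * weakNorm r x) := by
        rw [← hpow]
        gcongr
        exact weakNorm_one_smul_le hpr (fun k => by positivity) x
    _ = (∑ k, ‖T (x k)‖ ^ r) ^ (1 / r.conjExponent) * (C * weakNorm r x) := mul_left_comm _ _ _

end SummingBoundWith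

end Summing

section LpDual

variable {Ω : Type*} [MeasurableSpace Ω] {v : Measure Ω} {p q : ℝ≥0∞} [Fact (1 ≤ p)]
  [Fact (1 ≤ q)] [ENNReal.HolderConjugate p q]

theorem exists_norm_le_one_forall_apply_eq_integral_mul {a : Ω → ℂ} (ha : MemLp a q v)
    (ha₁ : eLpNorm a q v ≤ 1) :
    ∃ φ : Lp ℂ p v →L[ℂ] ℂ, ‖φ‖ ≤ 1 ∧ ∀ f, φ f = ∫ x, f x * a x ∂v := by
  let B := ContinuousLinearMap.mul ℂ ℂ
  refine ⟨(B.lpPairing v p q).flip ha.toLp, ?_, fun f => ?_⟩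
  · refine ContinuousLinearMap.opNorm_le_bound _ zero_le_one fun f => ?_
    rw [ContinuousLinearMap.flip_apply, B.lpPairing_eq_integral,
      ← integral_congr_ae (B.coeFn_holder (r := 1) f ha.toLp), ← L1.integral_eq_integral]
    calc ‖L1.integral (B.holder 1 f ha.toLp)‖ ≤ ‖B.holder 1 f ha.toLp‖ := L1.norm_integral_le _
      _ ≤ ‖B‖ * ‖f‖ * ‖ha.toLp‖ := B.norm_holder_apply_apply_le f _
      _ ≤ 1 * ‖f‖ * 1 := by
          gcongr
          · exact ContinuousLinearMap.opNorm_mul_le ℂ ℂ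
          · rw [Lp.norm_toLp]
            exact ENNReal.toReal_le_of_le_ofReal zero_le_one (by rwa [ENNReal.ofReal_one])
      _ = _ := mul_one _
  · rw [ContinuousLinearMap.flip_apply, B.lpPairing_eq_integral]
    refine integral_congr_ae (ha.coeFn_toLp.mono fun x hx => ?_)
    dsimp only
    rw [hx, ContinuousLinearMap.mul_apply']

end LpDual

section BergmanEmbedding

open Module (finrank)

variable {n : ℕ} {q α : ℝ} {μ : Measure (En n)}

theorem volConst_pos (n : ℕ) (hα : -1 < α) : 0 < volConst n α :=
  div_pos (Real.Gamma_pos_of_pos (by linarith [n.cast_nonneg (α := ℝ)]))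
    (mul_pos (by positivity) (Real.Gamma_pos_of_pos (by linarith)))

/-- The multiple of Lebesgue measure on `ℂⁿ` absorbing both the normalization of `vMeas` and the
constant `c_α`, so that `wMeas n α = weightedMeas (scaledVolume n α) α`. -/
def scaledVolume (n : ℕ) (α : ℝ) : Measure (En n) :=
  ((volume (ball (0 : En n) 1))⁻¹ * ENNReal.ofReal (volConst n α)) • volume

theorem isAddHaarMeasure_scaledVolume (n : ℕ) (hα : -1 < α) :
    (scaledVolume n α).IsAddHaarMeasure :=
  Measure.IsAddHaarMeasure.smul _
    (mul_ne_zero (ENNReal.inv_ne_zero.2 measure_ball_lt_top.ne)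
      (ENNReal.ofReal_pos.2 (volConst_pos n hα)).ne')
    (ENNReal.mul_ne_top (ENNReal.inv_ne_top.2 (measure_ball_pos volume 0 one_pos).ne')
      ENNReal.ofReal_ne_top)

theorem wMeas_eq_weightedMeas (n : ℕ) (hα : -1 < α) :
    wMeas n α = weightedMeas (scaledVolume n α) α := by
  rw [wMeas, vMeas, weightedMeas, scaledVolume, mul_smul, Measure.restrict_smul,
    Measure.restrict_smul, withDensity_smul_measure, withDensity_smul_measure,
    withDensity_smul_measure]
  congr 1
  rw [← withDensity_smul _ (by fun_prop)]
  congr 1 with z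
  rw [Pi.smul_apply, smul_eq_mul, ENNReal.ofReal_mul (volConst_pos n hα).le]

theorem eLpNorm_le_of_representsEmbedding [Fact (1 ≤ ENNReal.ofReal q)]
    {J : BergmanSpace n 1 α →L[ℂ] Lp ℂ (ENNReal.ofReal q) μ}
    (hJ : RepresentsEmbedding n 1 q α μ J) {g : En n → ℂ}
    (hg : DifferentiableOn ℂ g (ball 0 1)) (hgm : MemLp g 1 (wMeas n α)) :
    eLpNorm g (ENNReal.ofReal q) μ ≤ ‖J‖ₑ * eLpNorm g 1 (wMeas n α) := by
  rw [← ENNReal.ofReal_one] at hgm ⊢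
  let G : BergmanSpace n 1 α := ⟨hgm.toLp g, g, hg, hgm.coeFn_toLp⟩
  rw [← eLpNorm_congr_ae (hJ G g hg hgm.coeFn_toLp), ← Lp.enorm_def, ← Lp.enorm_toLp hgm]
  exact J.le_opENorm G

theorem scalarBound_weakNorm_one {κ : Type*} [Fintype κ] {x : κ → BergmanSpace n 1 α}
    {g : κ → En n → ℂ} (hxg : ∀ k, (x k : En n → ℂ) =ᵐ[wMeas n α] g k) :
    ScalarBound (wMeas n α) g (weakNorm 1 x) := by
  intro a ha ha₁
  have : ENNReal.HolderConjugate (ENNReal.ofReal 1) ∞ := by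
    rw [ENNReal.ofReal_one]
    infer_instance
  have hmem : MemLp a ∞ (wMeas n α) :=
    memLp_top_of_bound ha.aestronglyMeasurable 1 (ae_of_all _ ha₁)
  have hnorm : eLpNorm a ∞ (wMeas n α) ≤ 1 := by
    rw [← ENNReal.ofReal_one, eLpNorm_exponent_top]
    exact eLpNormEssSup_le_of_ae_bound (ae_of_all _ ha₁)
  obtain ⟨φ, hφ, hφa⟩ := exists_norm_le_one_forall_apply_eq_integral_mul
    (p := ENNReal.ofReal 1) hmem hnorm
  have hψ : ‖φ.comp (Submodule.subtypeL (holoSubmodule n (ENNReal.ofReal 1) (unitBall n)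
      (wMeas n α)))‖ ≤ 1 :=
    ContinuousLinearMap.opNorm_le_bound _ zero_le_one fun y => φ.le_of_opNorm_le hφ (y : Lp ℂ _ _)
  refine le_of_eq_of_le (Finset.sum_congr rfl fun k _ => ?_) (sum_norm_apply_le_weakNorm_one x hψ)
  rw [ContinuousLinearMap.comp_apply, Submodule.subtypeL_apply, hφa]
  exact congrArg norm (integral_congr_ae ((hxg k).mono fun z hz => by dsimp only; rw [hz]))

theorem exists_summingBoundWith_one_of_representsEmbedding (hn : 1 ≤ n) (hα : -1 < α)
    (hq : 2 ≤ q) [Fact (1 ≤ ENNReal.ofReal q)] (hμ : μ (unitBall n)ᶜ = 0)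
    {J : BergmanSpace n 1 α →L[ℂ] Lp ℂ (ENNReal.ofReal q) μ}
    (hJ : RepresentsEmbedding n 1 q α μ J) : ∃ C : ℝ, 0 ≤ C ∧ SummingBoundWith 1 1 J C := by
  have : Nonempty (Fin n) := Fin.pos_iff_nonempty.1 hn
  have := isAddHaarMeasure_scaledVolume n hα
  set ν := scaledVolume n α
  have hν : wMeas n α = weightedMeas ν α := wMeas_eq_weightedMeas n hα
  have hμ' : ∀ᵐ w ∂μ, ‖w‖ < 1 := by
    filter_upwards [mem_ae_iff.2 hμ] with w hw using mem_ball_zero_iff.1 hw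
  obtain ⟨D, hD, hembed⟩ := exists_eLpNorm_le_eLpNorm_two_of_le_eLpNorm_one ν (F := ℂ) hμ' hα hq
    (K := ‖J‖ₑ) enorm_ne_top fun g hg hgm => by
      rw [← hν] at hgm ⊢
      exact eLpNorm_le_of_representsEmbedding hJ hg hgm
  obtain ⟨B, hB, hsum⟩ := exists_sum_eLpNorm_two_le_of_scalarBound ν α
  refine ⟨D.toReal * B, by positivity, fun m x => ?_⟩
  choose g hg hxg using fun k => (x k).2
  have hgi (k : Fin m) : Integrable (g k) (weightedMeas ν α) := by
    rw [← hν, ← memLp_one_iff_integrable, ← ENNReal.ofReal_one]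
    exact (memLp_congr_ae (hxg k)).1 (Lp.memLp _)
  have hnorm (k : Fin m) : ‖J (x k)‖ ≤
      D.toReal * (eLpNorm (g k) 2 (weightedMeas ν (finrank ℂ (En n) + 1 + 2 * α))).toReal := by
    rw [Lp.norm_def, eLpNorm_congr_ae (hJ (x k) (g k) (hg k) (hxg k)), ← ENNReal.toReal_mul]
    exact ENNReal.toReal_mono
      (ENNReal.mul_ne_top hD (eLpNorm_two_ne_top_of_integrable ν (hg k) (hgi k)))
      (hembed (g k) (hg k))
  simp only [Real.rpow_one, div_one]
  calc ∑ k, ‖J (x k)‖ ≤ D.toReal *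
        ∑ k, (eLpNorm (g k) 2 (weightedMeas ν (finrank ℂ (En n) + 1 + 2 * α))).toReal := by
        rw [Finset.mul_sum]
        exact Finset.sum_le_sum fun k _ => hnorm k
    _ ≤ D.toReal * (B * weakNorm 1 x) := by
        gcongr
        exact hsum hg hgi (hν ▸ scalarBound_weakNorm_one hxg)
    _ = _ := by simp only [weakNorm, Real.rpow_one, div_one, mul_assoc]

end BergmanEmbedding

theorem statement8 (n : ℕ) (hn : 1 ≤ n) (q r α : ℝ)
    (hα : -1 < α) (hq : 2 ≤ q) (hr : 1 ≤ r)
    [Fact (1 ≤ ENNReal.ofReal q)]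
    (μ : Measure (En n)) (hμ : μ (unitBall n)ᶜ = 0) :
    (∃ J : BergmanSpace n 1 α →ₗ[ℂ] Lp ℂ (ENNReal.ofReal q) μ,
        RepresentsEmbedding n 1 q α μ ⇑J ∧ IsSummingRS r r ⇑J) ↔
      ∃ J : BergmanSpace n 1 α →L[ℂ] Lp ℂ (ENNReal.ofReal q) μ,
        RepresentsEmbedding n 1 q α μ ⇑J := by
  constructor
  · rintro ⟨J, hJ, C, hC, hsum⟩
    exact ⟨J.mkContinuous C (hsum.norm_le (by linarith) hC), hJ⟩
  · rintro ⟨J, hJ⟩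
    obtain ⟨C, hC, hsum⟩ := exists_summingBoundWith_one_of_representsEmbedding hn hα hq hμ hJ
    exact ⟨J.toLinearMap, hJ, C, hC, SummingBoundWith.of_one (T := J.toLinearMap) hsum hr hC⟩
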